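/- Let P be a smooth Fano n-polytope with n+3 vertices having exactly five primitive collections, with vertices labeled V(P) = {v_1,…,v_{p_0}, y_1,…,y_{p_1}, z_1,…,z_{p_2}, t_1,…,t_{p_3}, u_1,…,u_{p_4}} for positive integers p_0, …, p_4 with p_0+⋯+p_4 = n+3, and primitive relations: v_1+⋯+v_{p_0}+y_1+⋯+y_{p_1} = c_2 z_2+⋯+c_{p_2} z_{p_2}+(d_1+1)t_1+⋯+(d_{p_3}+1)t_{p_3}; y_1+⋯+y_{p_1}+z_1+⋯+z_{p_2} = u_1+⋯+u_{p_4}; z_1+⋯+z_{p_2}+t_1+⋯+t_{p_3} = 0; t_1+⋯+t_{p_3}+u_1+⋯+u_{p_4} = y_1+⋯+y_{p_1}; u_1+⋯+u_{p_4}+v_1+⋯+v_{p_0} = c_2 z_2+⋯+c_{p_2} z_{p_2}+d_1 t_1+⋯+d_{p_3} t_{p_3}, where c_2,…,c_{p_2}, d_1,…,d_{p_3} are nonnegative integers. If P is F-isolated, then p_0 ≥ 2, p_2 = p_3 = 1, p_1 = p_4 ≥ 2, and d_1 = p_0 + p_1 − 2. -/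

import Mathlib

/-! ## Basic definitions: lattice polytopes, smooth Fano polytopes,
unimodular equivalence, F- and I-equivalence, primitive collections. -/

/-- A point of `ℝ^n` all of whose coordinates are integers. -/
def IsLatticePoint {n : ℕ} (x : Fin n → ℝ) : Prop := ∀ i, ∃ m : ℤ, x i = (m : ℝ)

/-- The vertex set of a polytope: its extreme points. -/
def vertexSet {n : ℕ} (P : Set (Fin n → ℝ)) : Set (Fin n → ℝ) :=
  Set.extremePoints ℝ P

/-- A lattice `n`-polytope: the convex hull of finitely many lattice points,
of full dimension `n`. -/
def IsLatticePolytope {n : ℕ} (P : Set (Fin n → ℝ)) : Prop :=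
  (∃ S : Finset (Fin n → ℝ), (∀ x ∈ S, IsLatticePoint x) ∧
    P = convexHull ℝ (S : Set (Fin n → ℝ))) ∧
  affineSpan ℝ P = ⊤

/-- A face of `P`: an exposed subset of `P`. -/
def IsFaceOf {n : ℕ} (F P : Set (Fin n → ℝ)) : Prop := IsExposed ℝ P F

/-- A facet of `P`: a face of affine dimension `n - 1`. -/
def IsFacetOf {n : ℕ} (F P : Set (Fin n → ℝ)) : Prop :=
  IsFaceOf F P ∧ Module.finrank ℝ (vectorSpan ℝ F) + 1 = n

/-- A set `S` of points of `ℝ^n` forms a `ℤ`-basis of `ℤ^n`: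
it consists of `n` lattice points whose matrix has determinant `±1`. -/
def IsUnimodularBasis {n : ℕ} (S : Set (Fin n → ℝ)) : Prop :=
  ∃ b : Fin n → (Fin n → ℝ), Function.Injective b ∧ Set.range b = S ∧
    (∀ i, IsLatticePoint (b i)) ∧ |(Matrix.of b).det| = 1

/-- A smooth Fano `n`-polytope: a lattice `n`-polytope with the origin in its
interior such that the vertex set of every facet is a `ℤ`-basis of `ℤ^n`. -/
def IsSmoothFano {n : ℕ} (P : Set (Fin n → ℝ)) : Prop :=
  IsLatticePolytope P ∧ (0 : Fin n → ℝ) ∈ interior P ∧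
    ∀ F : Set (Fin n → ℝ), IsFacetOf F P → IsUnimodularBasis (vertexSet P ∩ F)

/-- Two subsets of `ℝ^n` are unimodularly equivalent if an affine map of `ℝ^n`
mapping `ℤ^n` onto `ℤ^n` maps one onto the other. -/
def UnimodularEquiv {n : ℕ} (Q Q' : Set (Fin n → ℝ)) : Prop :=
  ∃ φ : (Fin n → ℝ) →ᵃ[ℝ] (Fin n → ℝ),
    φ '' {x | IsLatticePoint x} = {x | IsLatticePoint x} ∧ φ '' Q = Q'

/-- One step of an I-sequence: the vertex set of one polytope is obtained from
the vertex set of the other by adding one new lattice point. -/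
def IStep {n : ℕ} (P Q : Set (Fin n → ℝ)) : Prop :=
  (∃ w : Fin n → ℝ, IsLatticePoint w ∧ w ∉ vertexSet P ∧
    vertexSet Q = vertexSet P ∪ {w}) ∨
  (∃ w : Fin n → ℝ, IsLatticePoint w ∧ w ∉ vertexSet Q ∧
    vertexSet P = vertexSet Q ∪ {w})

/-- I-equivalence of smooth Fano `n`-polytopes. -/
def IEquiv {n : ℕ} (P Q : Set (Fin n → ℝ)) : Prop :=
  ∃ (k : ℕ) (c : Fin (k + 1) → Set (Fin n → ℝ)),
    (∀ i, IsSmoothFano (c i)) ∧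
    UnimodularEquiv P (c 0) ∧ UnimodularEquiv Q (c (Fin.last k)) ∧
    ∀ i : Fin k, IStep (c i.castSucc) (c i.succ)

/-- `Q` is the stellar subdivision of `P` at the new vertex `w`: `w` is the sum
of the vertices of a proper face `F` of `P`, and the facets of `Q` containing
`w` are exactly the sets `conv({w} ∪ (V(F') \ {v}))` for `F'` a facet of `P`
containing `F` and `v` a vertex of `F`. -/
def IsStellarSubdivisionAt {n : ℕ} (P Q : Set (Fin n → ℝ)) (w : Fin n → ℝ) : Prop :=
  ∃ F : Set (Fin n → ℝ), IsFaceOf F P ∧ F.Nonempty ∧ F ≠ P ∧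
    w = ∑ᶠ v ∈ vertexSet P ∩ F, v ∧
    {G : Set (Fin n → ℝ) | IsFacetOf G Q ∧ w ∈ G} =
      {G : Set (Fin n → ℝ) | ∃ F' v, IsFacetOf F' P ∧ F ⊆ F' ∧
        v ∈ vertexSet P ∩ F ∧
        G = convexHull ℝ (insert w ((vertexSet P ∩ F') \ {v}))}

/-- One step of an F-sequence: an I-step which moreover is a stellar
subdivision (or its inverse). -/
def FStep {n : ℕ} (P Q : Set (Fin n → ℝ)) : Prop :=
  (∃ w : Fin n → ℝ, IsLatticePoint w ∧ w ∉ vertexSet P ∧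
    vertexSet Q = vertexSet P ∪ {w} ∧ IsStellarSubdivisionAt P Q w) ∨
  (∃ w : Fin n → ℝ, IsLatticePoint w ∧ w ∉ vertexSet Q ∧
    vertexSet P = vertexSet Q ∪ {w} ∧ IsStellarSubdivisionAt Q P w)

/-- F-equivalence of smooth Fano `n`-polytopes. -/
def FEquiv {n : ℕ} (P Q : Set (Fin n → ℝ)) : Prop :=
  ∃ (k : ℕ) (c : Fin (k + 1) → Set (Fin n → ℝ)),
    (∀ i, IsSmoothFano (c i)) ∧
    UnimodularEquiv P (c 0) ∧ UnimodularEquiv Q (c (Fin.last k)) ∧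
    ∀ i : Fin k, FStep (c i.castSucc) (c i.succ)

/-- A smooth Fano polytope is F-isolated if every smooth Fano polytope
F-equivalent to it is unimodularly equivalent to it. -/
def FIsolated {n : ℕ} (P : Set (Fin n → ℝ)) : Prop :=
  ∀ Q : Set (Fin n → ℝ), IsSmoothFano Q → FEquiv Q P → UnimodularEquiv Q P

/-- A smooth Fano polytope is I-isolated if every smooth Fano polytope
I-equivalent to it is unimodularly equivalent to it. -/
def IIsolated {n : ℕ} (P : Set (Fin n → ℝ)) : Prop :=
  ∀ Q : Set (Fin n → ℝ), IsSmoothFano Q → IEquiv Q P → UnimodularEquiv Q P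

/-- A primitive collection of a smooth Fano polytope `P`: a nonempty set `A` of
vertices such that `conv(A)` is not a face of `P` but `conv(A \ {x})` is a face
of `P` for every `x ∈ A`. -/
def IsPrimitiveCollection {n : ℕ} (P A : Set (Fin n → ℝ)) : Prop :=
  A.Nonempty ∧ A ⊆ vertexSet P ∧ ¬ IsFaceOf (convexHull ℝ A) P ∧
    ∀ x ∈ A, IsFaceOf (convexHull ℝ (A \ {x})) P

/-- The standard basis vector `e_i` of `ℝ^n`. -/
def stdBasis {n : ℕ} (i : Fin n) : Fin n → ℝ := fun q => if q = i then 1 else 0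

/-- The polytope `T^n = conv{e_1, …, e_n, -(e_1 + ⋯ + e_n)}`,
corresponding to projective `n`-space. -/
def Tpoly (n : ℕ) : Set (Fin n → ℝ) :=
  convexHull ℝ (Set.range (stdBasis (n := n)) ∪ {fun _ => (-1 : ℝ)})

section

open Set

/-- The points of `V` at which the functional `l` takes the value `1`. -/
def tightSet {n : ℕ} (V : Set (Fin n → ℝ)) (l : (Fin n → ℝ) →ₗ[ℝ] ℝ) : Set (Fin n → ℝ) :=
  {x ∈ V | l x = 1}

/-- A functional bounded by `1` on `V` whose tight points span the whole space. -/
def IsFacetFunctional {n : ℕ} (V : Set (Fin n → ℝ)) (l : (Fin n → ℝ) →ₗ[ℝ] ℝ) : Prop :=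
  (∀ x ∈ V, l x ≤ 1) ∧ Submodule.span ℝ (tightSet V l) = ⊤

/-- The conditions on a set of points which make it the vertex set of a smooth Fano polytope. -/
structure IsSmoothFanoVertexSet {n : ℕ} (V : Set (Fin n → ℝ)) : Prop where
  finite : V.Finite
  lattice : ∀ x ∈ V, IsLatticePoint x
  zero_mem : (0 : Fin n → ℝ) ∈ interior (convexHull ℝ V)
  unimodular : ∀ l, IsFacetFunctional V l → IsUnimodularBasis (tightSet V l)
  exists_facet : ∀ x ∈ V, ∃ l, IsFacetFunctional V l ∧ l x = 1

section Convexity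

variable {n : ℕ} {V : Set (Fin n → ℝ)} {l : (Fin n → ℝ) →ₗ[ℝ] ℝ}

lemma tightSet_subset : tightSet V l ⊆ V := fun _ hx => hx.1

lemma le_of_mem_convexHull (f g : (Fin n → ℝ) →ₗ[ℝ] ℝ) (c : ℝ) (h : ∀ x ∈ V, f x ≤ g x + c)
    {q : Fin n → ℝ} (hq : q ∈ convexHull ℝ V) : f q ≤ g q + c := by
  have hc : Convex ℝ {x : Fin n → ℝ | (f - g) x ≤ c} :=
    convex_halfSpace_le (f - g).isLinear c
  have : q ∈ {x : Fin n → ℝ | (f - g) x ≤ c} :=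
    convexHull_min (fun x hx => by
      have := h x hx
      simp only [mem_ofPred_eq, LinearMap.sub_apply]; linarith) hc hq
  simp only [mem_ofPred_eq, LinearMap.sub_apply] at this
  linarith

lemma le_one_of_mem_convexHull (h : ∀ x ∈ V, l x ≤ 1) {q : Fin n → ℝ}
    (hq : q ∈ convexHull ℝ V) : l q ≤ 1 := by
  have := le_of_mem_convexHull l 0 1 (fun x hx => by simpa using h x hx) hq
  simpa using this

lemma mem_convexHull_tightSet (hl : ∀ x ∈ V, l x ≤ 1) {q : Fin n → ℝ}
    (hq : q ∈ convexHull ℝ V) (h : l q = 1) : q ∈ convexHull ℝ (tightSet V l) := by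
  suffices H : convexHull ℝ V ⊆ {q | l q ≤ 1 ∧ (l q = 1 → q ∈ convexHull ℝ (tightSet V l))} from
    (H hq).2 h
  refine convexHull_min (fun x hx => ⟨hl x hx, fun h => subset_convexHull _ _ ⟨hx, h⟩⟩) ?_
  rintro a ⟨ha, ha'⟩ b ⟨hb, hb'⟩ s t hs ht hst
  have e : l (s • a + t • b) = s * l a + t * l b := by simp
  refine ⟨by rw [e]; nlinarith, fun h1 => ?_⟩
  rw [e] at h1
  rcases hs.eq_or_lt with rfl | hs'
  · obtain rfl : t = 1 := by linarith
    simp only [zero_smul, one_smul, zero_add]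
    exact hb' (by linarith)
  rcases ht.eq_or_lt with rfl | ht'
  · obtain rfl : s = 1 := by linarith
    simp only [zero_smul, one_smul, add_zero]
    exact ha' (by linarith)
  have h2 : l a = 1 := by nlinarith
  have h3 : l b = 1 := by nlinarith
  exact convex_convexHull ℝ _ (ha' h2) (hb' h3) hs ht hst

lemma eq_one_of_mem_convexHull_tightSet {q : Fin n → ℝ}
    (hq : q ∈ convexHull ℝ (tightSet V l)) : l q = 1 := by
  have h1 := le_one_of_mem_convexHull (l := l) (fun x hx => hx.2.le) hq
  have h2 := le_of_mem_convexHull 0 l (-1) (fun x hx => by simp [hx.2]) hq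
  simp at h2
  linarith

lemma exists_pos_of_zero_mem_interior (h0 : (0 : Fin n → ℝ) ∈ interior (convexHull ℝ V))
    {m : (Fin n → ℝ) →ₗ[ℝ] ℝ} (hm : m ≠ 0) : ∃ x ∈ V, 0 < m x := by
  by_contra! H
  have hle : ∀ q ∈ convexHull ℝ V, m q ≤ 0 := fun q hq => by
    simpa using le_of_mem_convexHull m 0 0 (fun x hx => by simpa using H x hx) hq
  apply hm
  ext1 i
  ext
  simp only [LinearMap.coe_comp, Function.comp_apply, LinearMap.zero_apply]
  set y := (LinearMap.single ℝ (fun _ => ℝ) i) (1 : ℝ) with hy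
  have hc : Continuous fun t : ℝ => t • y := by fun_prop
  have h1 : (fun t : ℝ => t • y) ⁻¹' (interior (convexHull ℝ V)) ∈ nhds (0 : ℝ) :=
    (isOpen_interior.preimage hc).mem_nhds (by simpa using h0)
  obtain ⟨ε, hε, hb⟩ := Metric.mem_nhds_iff.1 h1
  have hp : ε / 2 ∈ Metric.ball (0 : ℝ) ε := by
    simp [abs_of_pos hε]; linarith
  have hn : -(ε / 2) ∈ Metric.ball (0 : ℝ) ε := by
    simp [abs_of_pos hε]; linarith
  have e1 := hle _ (interior_subset (hb hp))
  have e2 := hle _ (interior_subset (hb hn))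
  simp only [map_smul, smul_eq_mul] at e1 e2
  have : m y = 0 := by nlinarith
  simpa using this

/-- Every functional bounded by `1` can be moved to a facet functional without losing tight
points. -/
lemma exists_isFacetFunctional (hV : V.Finite)
    (h0 : (0 : Fin n → ℝ) ∈ interior (convexHull ℝ V)) (hl : ∀ x ∈ V, l x ≤ 1) :
    ∃ l', IsFacetFunctional V l' ∧ tightSet V l ⊆ tightSet V l' := by
  induction hk : (V \ tightSet V l).ncard using Nat.strong_induction_on generalizing l with
  | _ k ih =>
  by_cases hs : Submodule.span ℝ (tightSet V l) = ⊤
  · exact ⟨l, ⟨hl, hs⟩, subset_rfl⟩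
  obtain ⟨m, hm0, hm⟩ := Submodule.exists_le_ker_of_lt_top _ (lt_top_iff_ne_top.2 hs)
  have hmT : ∀ x ∈ tightSet V l, m x = 0 := fun x hx =>
    LinearMap.mem_ker.1 (hm (Submodule.subset_span hx))
  obtain ⟨x0, hx0, hx0'⟩ := exists_pos_of_zero_mem_interior h0 hm0
  obtain ⟨x, ⟨hxV, hxm⟩, hmin⟩ := Set.exists_min_image {x ∈ V | 0 < m x}
    (fun x => (1 - l x) / m x) (hV.subset (sep_subset _ _)) ⟨x0, hx0, hx0'⟩
  set s := (1 - l x) / m x with hs_def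
  have hs0 : 0 ≤ s := div_nonneg (by linarith [hl x hxV]) hxm.le
  have hl' : ∀ z ∈ V, (l + s • m) z ≤ 1 := by
    intro z hz
    simp only [LinearMap.add_apply, LinearMap.smul_apply, smul_eq_mul]
    rcases le_or_gt (m z) 0 with h | h
    · have := hl z hz
      nlinarith
    · have := hmin z ⟨hz, h⟩
      rw [le_div_iff₀ h] at this
      linarith
  have hsub : tightSet V l ⊆ tightSet V (l + s • m) := fun z hz => ⟨hz.1, by
    simp [hmT z hz, hz.2]⟩
  have hxT : x ∈ tightSet V (l + s • m) := ⟨hxV, by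
    simp only [LinearMap.add_apply, LinearMap.smul_apply, smul_eq_mul, hs_def]
    field_simp; ring⟩
  have hxT' : x ∉ tightSet V l := fun h => by rw [hmT x h] at hxm; exact lt_irrefl _ hxm
  obtain ⟨l', h1, h2⟩ := ih _ (by
    rw [← hk]
    apply Set.ncard_lt_ncard _ (hV.subset sdiff_subset)
    exact ⟨sdiff_subset_sdiff_right hsub, fun h => (h ⟨hxV, hxT'⟩).2 hxT⟩) hl' rfl
  exact ⟨l', h1, hsub.trans h2⟩

/-- The cones over the facets cover the space. -/
lemma exists_mem_cone (hn : 0 < n) (hV : V.Finite)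
    (h0 : (0 : Fin n → ℝ) ∈ interior (convexHull ℝ V)) (p : Fin n → ℝ) :
    ∃ l, IsFacetFunctional V l ∧ ∃ r : ℝ, 0 ≤ r ∧ ∃ q ∈ convexHull ℝ (tightSet V l),
      p = r • q := by
  have : Nonempty (Fin n) := ⟨⟨0, hn⟩⟩
  by_cases hp : p = 0
  · obtain ⟨l, hl, -⟩ := exists_isFacetFunctional (l := 0) hV h0 (by simp)
    have hne : (tightSet V l).Nonempty := by
      rw [nonempty_iff_ne_empty]
      intro h
      have := hl.2
      rw [h, Submodule.span_empty] at this
      exact bot_ne_top this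
    obtain ⟨q, hq⟩ := hne
    exact ⟨l, hl, 0, le_rfl, q, subset_convexHull _ _ hq, by simp [hp]⟩
  have hcomp : IsCompact (convexHull ℝ V) := hV.isCompact_convexHull ℝ
  have hclosed : IsClosed {t : ℝ | t • p ∈ convexHull ℝ V} :=
    hcomp.isClosed.preimage (by fun_prop : Continuous fun t : ℝ => t • p)
  obtain ⟨R, hR⟩ := hcomp.isBounded.exists_norm_le
  have hbdd : BddAbove {t : ℝ | t • p ∈ convexHull ℝ V} := by
    refine ⟨R / ‖p‖, fun t ht => ?_⟩
    have h1 := hR _ ht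
    rw [norm_smul, Real.norm_eq_abs] at h1
    rw [le_div_iff₀ (norm_pos_iff.2 hp)]
    exact le_trans (by gcongr; exact le_abs_self t) h1
  have hc : Continuous fun t : ℝ => t • p := by fun_prop
  have key : ∀ t : ℝ, t • p ∈ interior (convexHull ℝ V) →
      ∃ t' > t, t' • p ∈ convexHull ℝ V := by
    intro t ht
    have h1 : (fun t : ℝ => t • p) ⁻¹' (interior (convexHull ℝ V)) ∈ nhds t :=
      (isOpen_interior.preimage hc).mem_nhds ht
    obtain ⟨ε, hε, hb⟩ := Metric.mem_nhds_iff.1 h1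
    refine ⟨t + ε / 2, by linarith, interior_subset (hb (?_ : t + ε / 2 ∈ _))⟩
    simp [abs_of_pos hε]
    linarith
  obtain ⟨t0, ht0, ht0'⟩ := key 0 (by simpa using h0)
  set t := sSup {t : ℝ | t • p ∈ convexHull ℝ V} with ht_def
  have htmem : t • p ∈ convexHull ℝ V := hclosed.csSup_mem ⟨t0, ht0'⟩ hbdd
  have htpos : 0 < t := lt_of_lt_of_le ht0 (le_csSup hbdd ht0')
  have hnint : t • p ∉ interior (convexHull ℝ V) := fun h => by
    obtain ⟨t', h1, h2⟩ := key t h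
    exact absurd (le_csSup hbdd h2) (not_le.2 h1)
  obtain ⟨f, hf⟩ := geometric_hahn_banach_open_point
    (convex_convexHull ℝ V).interior isOpen_interior hnint
  have hfpos : 0 < f (t • p) := by simpa using hf 0 h0
  have hfle : ∀ a ∈ convexHull ℝ V, f a ≤ f (t • p) := by
    intro a ha
    have h1 : a ∈ closure (interior (convexHull ℝ V)) := by
      rw [(convex_convexHull ℝ V).closure_interior_eq_closure_of_nonempty_interior ⟨0, h0⟩]
      exact subset_closure ha
    exact closure_minimal (fun b hb => (hf b hb).le) (isClosed_le f.continuous continuous_const) h1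
  set g : (Fin n → ℝ) →ₗ[ℝ] ℝ := (f (t • p))⁻¹ • (f : (Fin n → ℝ) →ₗ[ℝ] ℝ) with hg
  have hgV : ∀ x ∈ V, g x ≤ 1 := fun x hx => by
    have := hfle x (subset_convexHull _ _ hx)
    simp only [hg, LinearMap.smul_apply, smul_eq_mul, ContinuousLinearMap.coe_coe]
    rw [inv_mul_le_iff₀ hfpos]
    linarith
  have hgp : g (t • p) = 1 := by
    simp only [hg, LinearMap.smul_apply, smul_eq_mul, ContinuousLinearMap.coe_coe]
    exact inv_mul_cancel₀ hfpos.ne'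
  obtain ⟨l, hl, hsub⟩ := exists_isFacetFunctional hV h0 hgV
  refine ⟨l, hl, t⁻¹, (inv_pos.2 htpos).le, t • p,
    convexHull_mono hsub (mem_convexHull_tightSet hgV htmem hgp), ?_⟩
  rw [smul_smul, inv_mul_cancel₀ htpos.ne', one_smul]

end Convexity

section Facets

variable {n : ℕ} {V S T : Set (Fin n → ℝ)} {l : (Fin n → ℝ) →ₗ[ℝ] ℝ}

lemma IsUnimodularBasis.ncard_eq (h : IsUnimodularBasis S) : S.ncard = n := by
  obtain ⟨b, hb, rfl, -⟩ := h
  rw [← image_univ, ncard_image_of_injective _ hb, ncard_univ, Nat.card_fin]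

lemma IsUnimodularBasis.finite (h : IsUnimodularBasis S) : S.Finite := by
  obtain ⟨b, hb, rfl, -⟩ := h
  exact finite_range b

lemma IsUnimodularBasis.exists_functional (h : IsUnimodularBasis S) (f : (Fin n → ℝ) → ℝ) :
    ∃ l : (Fin n → ℝ) →ₗ[ℝ] ℝ, ∀ x ∈ S, l x = f x := by
  obtain ⟨b, hb, rfl, -, hdet⟩ := h
  have hu : IsUnit (Matrix.of b).det := by
    rw [isUnit_iff_ne_zero]
    intro h
    simp [h] at hdet
  have hli : LinearIndependent ℝ b :=
    Matrix.linearIndependent_rows_iff_isUnit.2 ((Matrix.isUnit_iff_isUnit_det _).2 hu)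
  let B := basisOfLinearIndependentOfCardEqFinrank' b hli (by simp)
  refine ⟨B.constr ℝ (fun i => f (b i)), ?_⟩
  rintro _ ⟨i, rfl⟩
  have : b i = B i := by simp [B]
  conv_lhs => rw [this]
  rw [Module.Basis.constr_basis]

lemma IsUnimodularBasis.insert_sdiff (h : IsUnimodularBasis S) {a x : Fin n → ℝ} (ha : a ∈ S)
    (hx : IsLatticePoint x) (hxS : x ∉ S) (hsub : x - a ∈ Submodule.span ℝ (S \ {a})) :
    IsUnimodularBasis (insert x (S \ {a})) := by
  obtain ⟨b, hb, rfl, hlat, hdet⟩ := h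
  obtain ⟨i, rfl⟩ := ha
  have hδ : ∀ δ ∈ Submodule.span ℝ (range b \ {b i}),
      ((Matrix.of b).updateRow i δ).det = 0 := by
    intro δ hδ
    induction hδ using Submodule.span_induction with
    | mem y hy =>
      obtain ⟨⟨j, rfl⟩, hj⟩ := hy
      have hij : j ≠ i := fun h => hj (by simp [h])
      exact Matrix.det_updateRow_eq_zero (M := Matrix.of b) hij
    | zero => exact Matrix.det_eq_zero_of_row_eq_zero i (by simp)
    | add y z _ _ hy hz => rw [Matrix.det_updateRow_add, hy, hz, add_zero]
    | smul c y _ hy => rw [Matrix.det_updateRow_smul, hy, mul_zero]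
  refine ⟨Function.update b i x, ?_, ?_, ?_, ?_⟩
  · intro j k hjk
    by_cases hj : j = i <;> by_cases hk : k = i
    · rw [hj, hk]
    · subst hj
      rw [Function.update_self, Function.update_of_ne hk] at hjk
      exact absurd ⟨k, hjk.symm⟩ hxS
    · subst hk
      rw [Function.update_self, Function.update_of_ne hj] at hjk
      exact absurd ⟨j, hjk⟩ hxS
    · rw [Function.update_of_ne hk, Function.update_of_ne hj] at hjk
      exact hb hjk
  · ext y
    constructor
    · rintro ⟨j, rfl⟩
      by_cases hj : j = i
      · subst hj; simp
      · rw [Function.update_of_ne hj]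
        exact Or.inr ⟨⟨j, rfl⟩, fun h => hj (hb h)⟩
    · rintro (rfl | ⟨⟨j, rfl⟩, hj⟩)
      · exact ⟨i, by simp⟩
      · exact ⟨j, Function.update_of_ne (fun h => hj (by simp [h])) _ _⟩
  · intro j
    by_cases hj : j = i
    · subst hj; simpa using hx
    · rw [Function.update_of_ne hj]; exact hlat j
  · have e : Matrix.of (Function.update b i x) =
        (Matrix.of b).updateRow i (b i + (x - b i)) := by
      rw [add_sub_cancel]
      rfl
    have e' : (Matrix.of b).updateRow i (b i) = Matrix.of b := Matrix.updateRow_eq_self _ i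
    rw [e, Matrix.det_updateRow_add, hδ _ hsub, add_zero, e', hdet]

lemma IsUnimodularBasis.notMem_span_sdiff (h : IsUnimodularBasis S) {x : Fin n → ℝ} (hx : x ∈ S) :
    x ∉ Submodule.span ℝ (S \ {x}) := by
  classical
  obtain ⟨m, hm⟩ := h.exists_functional (fun y => if y = x then 1 else 0)
  intro hmem
  have h1 : Submodule.span ℝ (S \ {x}) ≤ LinearMap.ker m := by
    rw [Submodule.span_le]
    intro y hy
    simp only [SetLike.mem_coe, LinearMap.mem_ker]
    rw [hm y hy.1, if_neg (fun h => hy.2 (by simp [h]))]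
  have := LinearMap.mem_ker.1 (h1 hmem)
  rw [hm x hx] at this
  simp at this

lemma le_ncard_of_span_eq_top (hT : T.Finite) (h : Submodule.span ℝ T = ⊤) : n ≤ T.ncard := by
  have := hT.fintype
  have h1 := finrank_span_le_card (R := ℝ) T
  rw [h, finrank_top, Module.finrank_fin_fun] at h1
  rwa [Set.ncard_eq_toFinset_card']

lemma finrank_vectorSpan_add_one (hne : T.Nonempty) (hl : ∀ x ∈ T, l x = 1) :
    Module.finrank ℝ (vectorSpan ℝ T) + 1 = Module.finrank ℝ (Submodule.span ℝ T) := by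
  obtain ⟨x, hx⟩ := hne
  have hker : vectorSpan ℝ T ≤ LinearMap.ker l := by
    rw [vectorSpan_def, Submodule.span_le]
    rintro _ ⟨a, ha, b, hb, rfl⟩
    simp [hl a ha, hl b hb]
  have hle : vectorSpan ℝ T ≤ Submodule.span ℝ T := by
    rw [vectorSpan_def, Submodule.span_le]
    rintro _ ⟨a, ha, b, hb, rfl⟩
    exact Submodule.sub_mem _ (Submodule.subset_span ha) (Submodule.subset_span hb)
  have hlt : vectorSpan ℝ T < Submodule.span ℝ T := by
    refine lt_of_le_of_ne hle fun h => ?_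
    have h1 : x ∈ vectorSpan ℝ T := h ▸ Submodule.subset_span hx
    have h2 := LinearMap.mem_ker.1 (hker h1)
    rw [hl x hx] at h2
    exact one_ne_zero h2
  have hsup : Submodule.span ℝ T ≤ vectorSpan ℝ T ⊔ Submodule.span ℝ {x} := by
    rw [Submodule.span_le]
    intro y hy
    have : y = (y - x) + x := by abel
    rw [this]
    exact Submodule.add_mem_sup (vsub_mem_vectorSpan ℝ hy hx) (Submodule.mem_span_singleton_self x)
  have h1 := Submodule.finrank_lt_finrank_of_lt hlt
  have h2 := Submodule.finrank_mono hsup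
  have h3 := Submodule.finrank_add_le_finrank_add_finrank (vectorSpan ℝ T) (Submodule.span ℝ {x})
  have h4 : Module.finrank ℝ (Submodule.span ℝ {x}) ≤ 1 := by
    simpa using finrank_span_le_card (R := ℝ) ({x} : Set (Fin n → ℝ))
  omega

lemma vectorSpan_convexHull (T : Set (Fin n → ℝ)) :
    vectorSpan ℝ (convexHull ℝ T) = vectorSpan ℝ T := by
  rw [← direction_affineSpan, affineSpan_convexHull, direction_affineSpan]

lemma isExposed_convexHull_tightSet (hl : ∀ x ∈ V, l x ≤ 1) :
    IsExposed ℝ (convexHull ℝ V) (convexHull ℝ (tightSet V l)) := by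
  rintro ⟨q0, hq0⟩
  refine ⟨LinearMap.toContinuousLinearMap l, ?_⟩
  ext q
  have h0 := eq_one_of_mem_convexHull_tightSet hq0
  constructor
  · intro hq
    refine ⟨convexHull_mono tightSet_subset hq, fun y hy => ?_⟩
    simpa [eq_one_of_mem_convexHull_tightSet hq] using le_one_of_mem_convexHull hl hy
  · rintro ⟨hq, hmax⟩
    refine mem_convexHull_tightSet hl hq (le_antisymm (le_one_of_mem_convexHull hl hq) ?_)
    simpa [h0] using hmax q0 (convexHull_mono tightSet_subset hq0)

/-- A nonempty exposed face other than the whole polytope is cut out by a functional with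
maximum `1`. -/
lemma exists_functional_of_isExposed
    (h0 : (0 : Fin n → ℝ) ∈ interior (convexHull ℝ V)) {G : Set (Fin n → ℝ)}
    (hG : IsExposed ℝ (convexHull ℝ V) G) (hne : G.Nonempty) (hGV : G ≠ convexHull ℝ V) :
    ∃ l : (Fin n → ℝ) →ₗ[ℝ] ℝ, (∀ x ∈ V, l x ≤ 1) ∧ G = convexHull ℝ (tightSet V l) := by
  obtain ⟨f, hf⟩ := hG hne
  obtain ⟨x, hx⟩ := hne
  have hf0 : (f : (Fin n → ℝ) →ₗ[ℝ] ℝ) ≠ 0 := by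
    intro h
    have h' : ∀ y, f y = 0 := fun y => by
      simpa using congrArg (fun g : (Fin n → ℝ) →ₗ[ℝ] ℝ => g y) h
    apply hGV
    rw [hf]
    ext y
    simp [h']
  obtain ⟨y, hy, hfy⟩ := exists_pos_of_zero_mem_interior h0 hf0
  rw [hf] at hx
  have hpos : 0 < f x := lt_of_lt_of_le hfy (hx.2 y (subset_convexHull _ _ hy))
  have hle : ∀ z ∈ convexHull ℝ V, ((f x)⁻¹ • (f : (Fin n → ℝ) →ₗ[ℝ] ℝ)) z ≤ 1 := by
    intro z hz
    simp only [LinearMap.smul_apply, smul_eq_mul, ContinuousLinearMap.coe_coe]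
    rw [inv_mul_le_iff₀ hpos, mul_one]
    exact hx.2 z hz
  refine ⟨(f x)⁻¹ • (f : (Fin n → ℝ) →ₗ[ℝ] ℝ),
    fun z hz => hle z (subset_convexHull _ _ hz), ?_⟩
  ext z
  constructor
  · intro hz
    rw [hf] at hz
    refine mem_convexHull_tightSet (fun z hz => hle z (subset_convexHull _ _ hz)) hz.1 ?_
    have : f z = f x := le_antisymm (hx.2 z hz.1) (hz.2 x hx.1)
    simp only [LinearMap.smul_apply, smul_eq_mul, ContinuousLinearMap.coe_coe, this]
    exact inv_mul_cancel₀ hpos.ne'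
  · intro hz
    have h1 := eq_one_of_mem_convexHull_tightSet hz
    simp only [LinearMap.smul_apply, smul_eq_mul, ContinuousLinearMap.coe_coe] at h1
    rw [inv_mul_eq_iff_eq_mul₀ hpos.ne', mul_one] at h1
    rw [hf]
    exact ⟨convexHull_mono tightSet_subset hz, fun y hy => by rw [h1]; exact hx.2 y hy⟩

lemma tightSet_nonempty (hn : 0 < n) (hl : IsFacetFunctional V l) : (tightSet V l).Nonempty := by
  have : Nonempty (Fin n) := ⟨⟨0, hn⟩⟩
  rw [nonempty_iff_ne_empty]
  intro h
  have := hl.2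
  rw [h, Submodule.span_empty] at this
  exact bot_ne_top this

lemma isFacetOf_iff (hn : 2 ≤ n)
    (h0 : (0 : Fin n → ℝ) ∈ interior (convexHull ℝ V)) {G : Set (Fin n → ℝ)} :
    IsFacetOf G (convexHull ℝ V) ↔
      ∃ l, IsFacetFunctional V l ∧ G = convexHull ℝ (tightSet V l) := by
  constructor
  · rintro ⟨hG, hdim⟩
    have hne : G.Nonempty := by
      rw [nonempty_iff_ne_empty]
      rintro rfl
      rw [vectorSpan_empty, finrank_bot] at hdim
      omega
    have hGV : G ≠ convexHull ℝ V := by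
      rintro rfl
      have := interior_convexHull_nonempty_iff_affineSpan_eq_top.1 ⟨0, h0⟩
      rw [vectorSpan_convexHull, ← direction_affineSpan, this, AffineSubspace.direction_top,
        finrank_top, Module.finrank_fin_fun] at hdim
      omega
    obtain ⟨l, hl, rfl⟩ := exists_functional_of_isExposed h0 hG hne hGV
    refine ⟨l, ⟨hl, ?_⟩, rfl⟩
    have := finrank_vectorSpan_add_one (convexHull_nonempty_iff.1 hne)
      (fun x (hx : x ∈ tightSet V l) => hx.2)
    rw [vectorSpan_convexHull, this] at hdim
    exact Submodule.eq_top_of_finrank_eq (by rw [hdim, Module.finrank_fin_fun])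
  · rintro ⟨l, hl, rfl⟩
    refine ⟨isExposed_convexHull_tightSet hl.1, ?_⟩
    rw [vectorSpan_convexHull, finrank_vectorSpan_add_one (tightSet_nonempty (by omega) hl)
      (fun x (hx : x ∈ tightSet V l) => hx.2), hl.2, finrank_top, Module.finrank_fin_fun]

lemma inter_convexHull_tightSet : V ∩ convexHull ℝ (tightSet V l) = tightSet V l := by
  ext x
  exact ⟨fun h => ⟨h.1, eq_one_of_mem_convexHull_tightSet h.2⟩,
    fun h => ⟨h.1, subset_convexHull _ _ h⟩⟩

lemma IsSmoothFanoVertexSet.of_isSmoothFano (hn : 2 ≤ n) {P : Set (Fin n → ℝ)}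
    (hP : IsSmoothFano P) :
    IsSmoothFanoVertexSet (vertexSet P) ∧ convexHull ℝ (vertexSet P) = P := by
  obtain ⟨⟨⟨S, hS, hPS⟩, -⟩, h0, hfac⟩ := hP
  have hsub : vertexSet P ⊆ S := by
    rw [hPS]; exact extremePoints_convexHull_subset
  have hfin : (vertexSet P).Finite := S.finite_toSet.subset hsub
  have hconv : convexHull ℝ (vertexSet P) = P := by
    have hc : IsCompact P := hPS ▸ S.finite_toSet.isCompact_convexHull ℝ
    have h1 := closure_convexHull_extremePoints hc (hPS ▸ convex_convexHull ℝ _)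
    rwa [show extremePoints ℝ P = vertexSet P from rfl,
      (hfin.isClosed_convexHull ℝ).closure_eq] at h1
  rw [← hconv] at h0
  refine ⟨⟨hfin, fun x hx => hS x (hsub hx), h0, fun l hl => ?_, fun x hx => ?_⟩, hconv⟩
  · have := hfac _ (by rw [← hconv]; exact (isFacetOf_iff hn h0).2 ⟨l, hl, rfl⟩)
    rwa [inter_convexHull_tightSet] at this
  · obtain ⟨l, hl, r, hr, q, hq, hxq⟩ := exists_mem_cone (by omega) hfin h0 x
    have hlx : l x = r := by
      rw [hxq, map_smul, eq_one_of_mem_convexHull_tightSet hq, smul_eq_mul, mul_one]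
    refine ⟨l, hl, le_antisymm (hl.1 x hx) ?_⟩
    by_contra! hlt
    rw [hlx] at hlt
    have hqP : q ∈ P := by rw [← hconv]; exact convexHull_mono tightSet_subset hq
    have h0P : (0 : Fin n → ℝ) ∈ P := by rw [← hconv]; exact interior_subset h0
    rcases hr.eq_or_lt with rfl | hr'
    · -- the origin is interior, hence not extreme
      rw [zero_smul] at hxq
      subst hxq
      have hd := hx
      rw [vertexSet, mem_extremePoints] at hd
      obtain ⟨y, hy, hy0⟩ : ∃ y ∈ vertexSet P, y ≠ 0 := by
        obtain ⟨y, hy⟩ := tightSet_nonempty (by omega) hl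
        exact ⟨y, hy.1, fun h => by simpa [h] using hy.2⟩
      have hc : Continuous fun t : ℝ => t • y := by fun_prop
      have h1 : (fun t : ℝ => t • y) ⁻¹' (interior (convexHull ℝ (vertexSet P))) ∈
          nhds (0 : ℝ) := (isOpen_interior.preimage hc).mem_nhds (by simpa using h0)
      obtain ⟨ε, hε, hb⟩ := Metric.mem_nhds_iff.1 h1
      have hp : ε / 2 ∈ Metric.ball (0 : ℝ) ε := by
        simp [abs_of_pos hε]; linarith
      have hm : -(ε / 2) ∈ Metric.ball (0 : ℝ) ε := by
        simp [abs_of_pos hε]; linarith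
      have e1 := interior_subset (hb hp)
      have e2 := interior_subset (hb hm)
      rw [hconv] at e1 e2
      have := (hd.2 _ e1 _ e2 ⟨1 / 2, 1 / 2, by norm_num, by norm_num, by norm_num, by
        simp⟩).1
      rw [smul_eq_zero] at this
      rcases this with h | h
      · linarith
      · exact hy0 h
    · have := (mem_extremePoints.1 hx).2 _ h0P _ hqP
        ⟨1 - r, r, by linarith, hr', by ring, by rw [hxq]; simp⟩
      rw [← this.1] at hlx
      simp at hlx
      linarith

lemma IsSmoothFanoVertexSet.vertexSet_convexHull (h : IsSmoothFanoVertexSet V) :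
    vertexSet (convexHull ℝ V) = V := by
  refine Subset.antisymm extremePoints_convexHull_subset fun x hx => ?_
  by_contra hxE
  set E := vertexSet (convexHull ℝ V) with hE
  have hEV : E ⊆ V := extremePoints_convexHull_subset
  have hconv : convexHull ℝ E = convexHull ℝ V := by
    have h1 := closure_convexHull_extremePoints (h.finite.isCompact_convexHull ℝ)
      (convex_convexHull ℝ V)
    rwa [show extremePoints ℝ (convexHull ℝ V) = E from rfl,
      ((h.finite.subset hEV).isClosed_convexHull ℝ).closure_eq] at h1
  obtain ⟨l, hl, hlx⟩ := h.exists_facet x hx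
  have hxc : x ∈ convexHull ℝ E := hconv ▸ subset_convexHull _ _ hx
  have h1 := mem_convexHull_tightSet (fun y hy => hl.1 y (hEV hy)) hxc hlx
  have h2 : tightSet E l ⊆ tightSet V l \ {x} := fun y hy =>
    ⟨⟨hEV hy.1, hy.2⟩, fun hyx => hxE (by rw [mem_singleton_iff] at hyx; exact hyx ▸ hy.1)⟩
  exact (h.unimodular l hl).notMem_span_sdiff ⟨hx, hlx⟩
    (convexHull_min Submodule.subset_span (Submodule.convex _) (convexHull_mono h2 h1))

lemma IsSmoothFanoVertexSet.isSmoothFano (hn : 2 ≤ n) (h : IsSmoothFanoVertexSet V) :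
    IsSmoothFano (convexHull ℝ V) := by
  refine ⟨⟨⟨h.finite.toFinset, by simpa using h.lattice, by simp⟩, ?_⟩, h.zero_mem, ?_⟩
  · rw [affineSpan_convexHull]
    exact interior_convexHull_nonempty_iff_affineSpan_eq_top.1 ⟨0, h.zero_mem⟩
  · intro F hF
    obtain ⟨l, hl, rfl⟩ := (isFacetOf_iff hn h.zero_mem).1 hF
    rw [h.vertexSet_convexHull, inter_convexHull_tightSet]
    exact h.unimodular l hl

end Facets

section Stellar

variable {n : ℕ} {V : Set (Fin n → ℝ)} {F : Finset (Fin n → ℝ)}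

/-- The conditions under which adding the sum of the vertices of the face `F` to the vertex set `V`
of a smooth Fano polytope gives the vertex set of a smooth Fano polytope. -/
structure IsBlowUpCenter (V : Set (Fin n → ℝ)) (F : Finset (Fin n → ℝ)) : Prop where
  one_lt_card : 1 < F.card
  exists_facet : ∃ l, IsFacetFunctional V l ∧ ↑F ⊆ tightSet V l
  extend : ∀ l : (Fin n → ℝ) →ₗ[ℝ] ℝ, (∀ x ∈ V, l x ≤ 1) → l (∑ x ∈ F, x) = 1 →
    ∃ l', IsFacetFunctional V l' ∧ ↑F ⊆ tightSet V l' ∧ tightSet V l ⊆ tightSet V l'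

lemma map_sum_eq_card {l : (Fin n → ℝ) →ₗ[ℝ] ℝ} (h : ∀ x ∈ F, l x = 1) :
    l (∑ x ∈ F, x) = F.card := by
  rw [map_sum, Finset.sum_congr rfl h]; simp

lemma map_sum_le_card {l : (Fin n → ℝ) →ₗ[ℝ] ℝ} (h : ∀ x ∈ F, l x ≤ 1) :
    l (∑ x ∈ F, x) ≤ F.card := by
  rw [map_sum]
  calc ∑ x ∈ F, l x ≤ ∑ x ∈ F, 1 := Finset.sum_le_sum h
    _ = F.card := by simp

lemma eq_one_of_card_le_map_sum {l : (Fin n → ℝ) →ₗ[ℝ] ℝ} (h : ∀ x ∈ F, l x ≤ 1)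
    (hs : (F.card : ℝ) ≤ l (∑ x ∈ F, x)) : ∀ x ∈ F, l x = 1 := by
  have h1 := le_antisymm hs (map_sum_le_card h)
  have h2 : ∑ x ∈ F, l x = ∑ x ∈ F, 1 := by rw [← map_sum, ← h1]; simp
  exact (Finset.sum_eq_sum_iff_of_le h).1 h2

lemma isLatticePoint_sum (h : ∀ x ∈ F, IsLatticePoint x) : IsLatticePoint (∑ x ∈ F, x) := by
  intro i
  choose! m hm using fun x hx => h x hx i
  exact ⟨∑ x ∈ F, m x, by
    rw [Finset.sum_apply, Int.cast_sum]; exact Finset.sum_congr rfl hm⟩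

namespace IsBlowUpCenter

lemma one_lt_of_subset (hF : IsBlowUpCenter V F) {l : (Fin n → ℝ) →ₗ[ℝ] ℝ}
    (h : ↑F ⊆ tightSet V l) : 1 < l (∑ x ∈ F, x) := by
  rw [map_sum_eq_card (fun x hx => (h hx).2)]
  exact_mod_cast hF.one_lt_card

lemma sum_notMem (hF : IsBlowUpCenter V F) : ∑ x ∈ F, x ∉ V := by
  obtain ⟨l, hl, hsub⟩ := hF.exists_facet
  exact fun h => absurd (hl.1 _ h) (not_le.2 (hF.one_lt_of_subset hsub))

lemma subset (hF : IsBlowUpCenter V F) : ↑F ⊆ V := by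
  obtain ⟨l, hl, hsub⟩ := hF.exists_facet
  exact hsub.trans tightSet_subset

lemma exists_ne (hF : IsBlowUpCenter V F) (x : Fin n → ℝ) : ∃ v ∈ F, v ≠ x :=
  Finset.exists_mem_ne hF.one_lt_card x

lemma tightSet_insert_of_ne {l : (Fin n → ℝ) →ₗ[ℝ] ℝ} {w : Fin n → ℝ} (h : l w ≠ 1) :
    tightSet (insert w V) l = tightSet V l := by
  ext x
  constructor
  · rintro ⟨rfl | hx, hx'⟩
    · exact absurd hx' h
    · exact ⟨hx, hx'⟩
  · exact fun hx => ⟨Or.inr hx.1, hx.2⟩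

lemma tightSet_insert_of_eq {l : (Fin n → ℝ) →ₗ[ℝ] ℝ} {w : Fin n → ℝ} (h : l w = 1) :
    tightSet (insert w V) l = insert w (tightSet V l) := by
  ext x
  constructor
  · rintro ⟨rfl | hx, hx'⟩
    · exact Or.inl rfl
    · exact Or.inr ⟨hx, hx'⟩
  · rintro (rfl | hx)
    · exact ⟨Or.inl rfl, h⟩
    · exact ⟨Or.inr hx.1, hx.2⟩

lemma isFacetFunctional_of_ne {l : (Fin n → ℝ) →ₗ[ℝ] ℝ} {w : Fin n → ℝ}
    (hl : IsFacetFunctional (insert w V) l) (h : l w ≠ 1) : IsFacetFunctional V l :=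
  ⟨fun x hx => hl.1 x (Or.inr hx), tightSet_insert_of_ne (V := V) h ▸ hl.2⟩

/-- Facets through the new vertex arise from old facets containing `F` by exchanging a vertex. -/
lemma exists_exchange (hV : IsSmoothFanoVertexSet V) (hF : IsBlowUpCenter V F)
    {l : (Fin n → ℝ) →ₗ[ℝ] ℝ} (hl : IsFacetFunctional (insert (∑ x ∈ F, x) V) l)
    (hlw : l (∑ x ∈ F, x) = 1) :
    ∃ l', IsFacetFunctional V l' ∧ ↑F ⊆ tightSet V l' ∧ ∃ v ∈ F,
      tightSet (insert (∑ x ∈ F, x) V) l = insert (∑ x ∈ F, x) (tightSet V l' \ {v}) := by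
  have hlV : ∀ x ∈ V, l x ≤ 1 := fun x hx => hl.1 x (Or.inr hx)
  obtain ⟨l', hl', hFl', hsub⟩ := hF.extend l hlV hlw
  have hnot : ¬ ↑F ⊆ tightSet V l := fun h => absurd hlw (hF.one_lt_of_subset h).ne'
  obtain ⟨v, hvF, hv⟩ := not_subset.1 hnot
  have hu := hV.unimodular l' hl'
  have hwT : ∑ x ∈ F, x ∉ tightSet V l' \ {v} := fun h => hF.sum_notMem h.1.1
  refine ⟨l', hl', hFl', v, hvF, ?_⟩
  refine eq_of_subset_of_ncard_le ?_ ?_ ((hu.finite.subset sdiff_subset).insert _)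
  · rw [tightSet_insert_of_eq hlw]
    exact insert_subset_insert fun x hx => ⟨hsub hx, fun h => hv (by
      rw [mem_singleton_iff] at h; exact h ▸ hx)⟩
  · rw [ncard_insert_of_notMem hwT (hu.finite.subset sdiff_subset),
      ncard_sdiff_singleton_add_one (hFl' hvF) hu.finite, hu.ncard_eq]
    exact le_ncard_of_span_eq_top ((hV.finite.insert _).subset tightSet_subset) hl.2

lemma isUnimodularBasis_exchange (hV : IsSmoothFanoVertexSet V) (hF : IsBlowUpCenter V F)
    {l : (Fin n → ℝ) →ₗ[ℝ] ℝ} (hl : IsFacetFunctional V l) (hFl : ↑F ⊆ tightSet V l)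
    {v : Fin n → ℝ} (hv : v ∈ F) :
    IsUnimodularBasis (insert (∑ x ∈ F, x) (tightSet V l \ {v})) := by
  classical
  refine (hV.unimodular l hl).insert_sdiff (hFl hv)
    (isLatticePoint_sum fun x hx => hV.lattice x (hF.subset hx))
    (fun h => hF.sum_notMem h.1) ?_
  rw [← Finset.sum_erase_add _ _ hv, add_sub_cancel_right]
  refine Submodule.sum_mem _ fun x hx => Submodule.subset_span ?_
  rw [Finset.mem_erase] at hx
  exact ⟨hFl hx.2, hx.1⟩

/-- Comparison of the new facet functional with the old one it arises from. -/
lemma le_of_exchange {l l' l'' : (Fin n → ℝ) →ₗ[ℝ] ℝ} {v : Fin n → ℝ}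
    (hl'' : ∀ x ∈ V, l'' x ≤ 1) (hFl' : ↑F ⊆ tightSet V l')
    (h : tightSet (insert (∑ x ∈ F, x) V) l = insert (∑ x ∈ F, x) (tightSet V l' \ {v}))
    {q : Fin n → ℝ} (hq : q ∈ convexHull ℝ (tightSet (insert (∑ x ∈ F, x) V) l)) :
    l'' q ≤ l' q := by
  have := le_of_mem_convexHull l'' l' 0 (fun x hx => ?_) hq
  · simpa using this
  rw [h] at hx
  rw [add_zero]
  rcases hx with rfl | hx
  · rw [map_sum_eq_card (fun x hx => (hFl' hx).2)]
    exact map_sum_le_card fun x hx => hl'' x (hFl' hx).1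
  · rw [hx.1.2]
    exact hl'' x hx.1.1

lemma zero_mem_interior (hV : IsSmoothFanoVertexSet V) (w : Fin n → ℝ) :
    (0 : Fin n → ℝ) ∈ interior (convexHull ℝ (insert w V)) :=
  interior_mono (convexHull_mono (subset_insert _ _)) hV.zero_mem

/-- Exchanging a vertex of `F` in an old facet containing `F` yields a new facet. -/
lemma exists_facet_exchange (hn : 0 < n) (hV : IsSmoothFanoVertexSet V) (hF : IsBlowUpCenter V F)
    {l' : (Fin n → ℝ) →ₗ[ℝ] ℝ} (hl' : IsFacetFunctional V l') (hFl' : ↑F ⊆ tightSet V l')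
    {v : Fin n → ℝ} (hv : v ∈ F) :
    ∃ l, IsFacetFunctional (insert (∑ x ∈ F, x) V) l ∧ l (∑ x ∈ F, x) = 1 ∧
      tightSet (insert (∑ x ∈ F, x) V) l = insert (∑ x ∈ F, x) (tightSet V l' \ {v}) := by
  classical
  have hu := hV.unimodular l' hl'
  set A : Finset (Fin n → ℝ) := (hu.finite.subset (sdiff_subset (t := {v}))).toFinset with hA
  have hmA : ∀ x, x ∈ A ↔ x ∈ tightSet V l' ∧ x ≠ v := fun x => by simp [hA]
  set w := ∑ x ∈ F, x with hw
  obtain ⟨l, hl, r, hr, q, hq, hp⟩ :=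
    exists_mem_cone hn (hV.finite.insert w) (zero_mem_interior hV w) (w + ∑ x ∈ A, x)
  have hlp : l (w + ∑ x ∈ A, x) = r := by
    rw [hp, map_smul, eq_one_of_mem_convexHull_tightSet hq, smul_eq_mul, mul_one]
  have hl'p : l' (w + ∑ x ∈ A, x) = F.card + A.card := by
    rw [map_add, map_sum_eq_card (fun x hx => (hFl' hx).2),
      map_sum_eq_card (fun x hx => ((hmA x).1 hx).1.2)]
  have hAV : ∀ x ∈ A, x ∈ V := fun x hx => ((hmA x).1 hx).1.1
  by_cases hlw : l w = 1
  · refine ⟨l, hl, hlw, ?_⟩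
    obtain ⟨l'', hl'', hFl'', v', hv', hT⟩ := hF.exists_exchange hV hl hlw
    have hle := le_of_exchange hl'.1 hFl'' hT hq
    have hle' : l' (w + ∑ x ∈ A, x) ≤ l'' (w + ∑ x ∈ A, x) := by
      rw [hp, map_smul, map_smul]
      exact mul_le_mul_of_nonneg_left hle hr
    rw [hl'p, map_add, map_sum_eq_card (fun x hx => (hFl'' hx).2)] at hle'
    have hA1 := eq_one_of_card_le_map_sum (fun x hx => hl''.1 x (hAV x hx))
      (add_le_add_iff_left _ |>.1 hle')
    have hTT : tightSet V l' = tightSet V l'' := by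
      refine eq_of_subset_of_ncard_le (fun x hx => ?_) ?_ (hV.unimodular l'' hl'').finite
      · by_cases hxv : x = v
        · rw [hxv]; exact hFl'' hv
        · exact ⟨hx.1, hA1 x ((hmA x).2 ⟨hx, hxv⟩)⟩
      · rw [hu.ncard_eq, (hV.unimodular l'' hl'').ncard_eq]
    rw [hT, hTT]
    suffices v' = v by rw [this]
    by_contra hne
    obtain ⟨f, hf⟩ := hu.exists_functional
      (fun x => if x = v' then 1 else if x = v then -1 else 0)
    have hfv' : f v' = 1 := by rw [hf _ (hFl' hv')]; simp
    have hfv : f v = -1 := by rw [hf _ (hFl' hv)]; simp [Ne.symm hne]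
    have hf0 : ∀ x ∈ tightSet V l', x ≠ v' → x ≠ v → f x = 0 := fun x hx h1 h2 => by
      rw [hf _ hx]; simp [h1, h2]
    have hfw : f w = 0 := by
      rw [hw, map_sum, ← Finset.add_sum_erase _ _ hv', ← Finset.add_sum_erase _ _
        (Finset.mem_erase.2 ⟨Ne.symm hne, hv⟩ : v ∈ F.erase v'), Finset.sum_eq_zero, hfv, hfv']
      · norm_num
      · intro x hx
        simp only [Finset.mem_erase] at hx
        exact hf0 x (hFl' hx.2.2) hx.2.1 hx.1
    have hfA : f (∑ x ∈ A, x) = 1 := by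
      rw [map_sum, ← Finset.add_sum_erase _ _ ((hmA v').2 ⟨hFl' hv', hne⟩),
        Finset.sum_eq_zero, hfv', add_zero]
      intro x hx
      simp only [Finset.mem_erase] at hx
      have := (hmA x).1 hx.2
      exact hf0 x this.1 hx.1 this.2
    have hfq : f q ≤ 0 := by
      have := le_of_mem_convexHull f 0 0 (fun x hx => ?_) hq
      · simpa using this
      rw [hT] at hx
      rcases hx with rfl | hx
      · rw [← hw, hfw]; simp
      · rw [← hTT] at hx
        by_cases hxv : x = v
        · simp [hxv, hfv]
        · simp [hf0 x hx.1 hx.2 hxv]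
    have h1 : f (w + ∑ x ∈ A, x) = 1 := by rw [map_add, hfw, hfA, zero_add]
    rw [hp, map_smul, smul_eq_mul] at h1
    nlinarith
  · exfalso
    have hlV := isFacetFunctional_of_ne hl hlw
    rw [tightSet_insert_of_ne hlw] at hq
    have h1 : l' q ≤ 1 := le_one_of_mem_convexHull hl'.1 (convexHull_mono tightSet_subset hq)
    have h2 : l' (w + ∑ x ∈ A, x) ≤ r := by
      rw [hp, map_smul, smul_eq_mul]
      nlinarith
    have h3 := map_sum_le_card (l := l) (fun x hx => hlV.1 x (hAV x hx))
    have h4 : l w ≤ 1 := hl.1 w (Or.inl rfl)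
    have h5 : (1 : ℝ) < F.card := by exact_mod_cast hF.one_lt_card
    rw [map_add] at hlp
    linarith

/-- Blowing up preserves smooth Fano polytopes. -/
lemma isSmoothFanoVertexSet (hn : 0 < n) (hV : IsSmoothFanoVertexSet V)
    (hF : IsBlowUpCenter V F) : IsSmoothFanoVertexSet (insert (∑ x ∈ F, x) V) where
  finite := hV.finite.insert _
  lattice := by
    rintro x (rfl | hx)
    · exact isLatticePoint_sum fun x hx => hV.lattice x (hF.subset hx)
    · exact hV.lattice x hx
  zero_mem := zero_mem_interior hV _
  unimodular := by
    intro l hl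
    by_cases hlw : l (∑ x ∈ F, x) = 1
    · obtain ⟨l', hl', hFl', v, hv, hT⟩ := hF.exists_exchange hV hl hlw
      rw [hT]
      exact hF.isUnimodularBasis_exchange hV hl' hFl' hv
    · rw [tightSet_insert_of_ne hlw]
      exact hV.unimodular l (isFacetFunctional_of_ne hl hlw)
  exists_facet := by
    rintro x (rfl | hx)
    · obtain ⟨l', hl', hFl'⟩ := hF.exists_facet
      obtain ⟨v, hv, -⟩ := hF.exists_ne 0
      obtain ⟨l, hl, hlw, -⟩ := hF.exists_facet_exchange hn hV hl' hFl' hv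
      exact ⟨l, hl, hlw⟩
    · obtain ⟨l', hl', hl'x⟩ := hV.exists_facet x hx
      obtain ⟨l, hl, r, hr, q, hq, hp⟩ := exists_mem_cone hn (hV.finite.insert (∑ x ∈ F, x))
        (zero_mem_interior hV _) x
      by_cases hlw : l (∑ x ∈ F, x) = 1
      · obtain ⟨l'', hl'', hFl'', v, hv, hT⟩ := hF.exists_exchange hV hl hlw
        have h1 : l' x ≤ l'' x := by
          have := le_of_exchange hl'.1 hFl'' hT hq
          rw [hp, map_smul, map_smul]
          exact mul_le_mul_of_nonneg_left this hr
        have hxT : x ∈ tightSet V l'' :=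
          ⟨hx, le_antisymm (hl''.1 x hx) (by rw [← hl'x]; exact h1)⟩
        obtain ⟨v', hv', hne⟩ := hF.exists_ne x
        obtain ⟨l₀, hl₀, -, hT₀⟩ := hF.exists_facet_exchange hn hV hl'' hFl'' hv'
        refine ⟨l₀, hl₀, ?_⟩
        have : x ∈ tightSet (insert (∑ x ∈ F, x) V) l₀ := by
          rw [hT₀]
          exact Or.inr ⟨hxT, Ne.symm hne⟩
        exact this.2
      · refine ⟨l, hl, le_antisymm (hl.1 x (Or.inr hx)) ?_⟩
        rw [tightSet_insert_of_ne hlw] at hq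
        have h1 : l' q ≤ 1 := le_one_of_mem_convexHull hl'.1 (convexHull_mono tightSet_subset hq)
        rw [hp, map_smul, smul_eq_mul] at hl'x
        rw [hp, map_smul, eq_one_of_mem_convexHull_tightSet hq, smul_eq_mul]
        nlinarith

end IsBlowUpCenter

/-- Subsets of tight sets span faces. -/
lemma IsSmoothFanoVertexSet.isFaceOf_convexHull (hV : IsSmoothFanoVertexSet V)
    {l : (Fin n → ℝ) →ₗ[ℝ] ℝ} (hl : IsFacetFunctional V l) {S : Set (Fin n → ℝ)}
    (hS : S ⊆ tightSet V l) : IsFaceOf (convexHull ℝ S) (convexHull ℝ V) := by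
  classical
  obtain ⟨f, hf⟩ := (hV.unimodular l hl).exists_functional (fun x => if x ∈ S then 1 else 0)
  -- perturb `l` towards `f`
  obtain ⟨N, hN0, hN⟩ : ∃ N : ℝ, 0 < N ∧ ∀ x ∈ V, l x < 1 → N * l x + f x < N + 1 := by
    have : ∀ x ∈ V, ∃ N : ℝ, l x < 1 → ∀ M ≥ N, M * l x + f x < M + 1 := by
      intro x hx
      refine ⟨(f x) / (1 - l x), fun h M hM => ?_⟩
      rw [ge_iff_le, div_le_iff₀ (by linarith)] at hM
      linarith
    choose! N hN using this
    obtain ⟨B, hB⟩ := (hV.finite.image N).bddAbove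
    exact ⟨max B 1, by positivity, fun x hx h => hN x hx h _
      (le_trans (hB (mem_image_of_mem N hx)) (le_max_left _ _))⟩
  set g : (Fin n → ℝ) →ₗ[ℝ] ℝ := (N + 1)⁻¹ • (N • l + f) with hg
  have hgx : ∀ x, g x = (N + 1)⁻¹ * (N * l x + f x) := fun x => by simp [hg, mul_add]
  have hN1 : 0 < N + 1 := by linarith
  have hgS : ∀ x ∈ V, g x ≤ 1 ∧ (g x = 1 ↔ x ∈ S) := by
    intro x hx
    rw [hgx, inv_mul_le_iff₀ hN1, inv_mul_eq_iff_eq_mul₀ hN1.ne', mul_one]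
    rcases (hl.1 x hx).lt_or_eq with h | h
    · have := hN x hx h
      exact ⟨this.le, fun h' => absurd h' this.ne, fun h' => absurd (hS h').2 h.ne⟩
    · rw [hf x ⟨hx, h⟩, h]
      by_cases hxS : x ∈ S
      · simp [hxS]
      · simp [hxS]
  have hST : tightSet V g = S := by
    ext x
    exact ⟨fun h => (hgS x h.1).2.1 h.2,
      fun h => ⟨(hS h).1, (hgS x (hS h).1).2.2 h⟩⟩
  rw [← hST]
  exact isExposed_convexHull_tightSet fun x hx => (hgS x hx).1

lemma IsBlowUpCenter.fStep (hn : 2 ≤ n) (hV : IsSmoothFanoVertexSet V)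
    (hF : IsBlowUpCenter V F) :
    ∃ w, IsLatticePoint w ∧ w ∉ vertexSet (convexHull ℝ V) ∧
      vertexSet (convexHull ℝ (insert (∑ x ∈ F, x) V)) = vertexSet (convexHull ℝ V) ∪ {w} ∧
      IsStellarSubdivisionAt (convexHull ℝ V) (convexHull ℝ (insert (∑ x ∈ F, x) V)) w := by
  have hn' : 0 < n := by omega
  have hW := hF.isSmoothFanoVertexSet hn' hV
  obtain ⟨l₀, hl₀, hFl₀⟩ := hF.exists_facet
  have hVF : vertexSet (convexHull ℝ V) ∩ convexHull ℝ ↑F = ↑F := by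
    rw [hV.vertexSet_convexHull]
    refine Subset.antisymm (fun x hx => ?_) fun x hx =>
      ⟨hF.subset hx, subset_convexHull _ _ hx⟩
    by_contra hxF
    have hxl : x ∈ tightSet V l₀ :=
      ⟨hx.1, eq_one_of_mem_convexHull_tightSet (convexHull_mono hFl₀ hx.2)⟩
    have hsub : (F : Set (Fin n → ℝ)) ⊆ tightSet V l₀ \ {x} := fun y hy =>
      ⟨hFl₀ hy, fun h => hxF (by rw [mem_singleton_iff] at h; exact h ▸ hy)⟩
    exact (hV.unimodular l₀ hl₀).notMem_span_sdiff hxl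
      (convexHull_min (hsub.trans Submodule.subset_span) (Submodule.convex _) hx.2)
  refine ⟨∑ x ∈ F, x, hW.lattice _ (Or.inl rfl), ?_, ?_, convexHull ℝ ↑F, ?_, ?_, ?_, ?_, ?_⟩
  · rw [hV.vertexSet_convexHull]
    exact hF.sum_notMem
  · rw [hV.vertexSet_convexHull, hW.vertexSet_convexHull, union_singleton]
  · exact hV.isFaceOf_convexHull hl₀ hFl₀
  · rw [convexHull_nonempty_iff, Finset.coe_nonempty, ← Finset.card_pos]
    exact lt_trans one_pos hF.one_lt_card
  · intro h
    have h0 : (0 : Fin n → ℝ) ∈ convexHull ℝ ↑F := h ▸ interior_subset hV.zero_mem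
    have := eq_one_of_mem_convexHull_tightSet (convexHull_mono hFl₀ h0)
    simp at this
  · rw [hVF, finsum_mem_coe_finset]
  · rw [hVF, hV.vertexSet_convexHull]
    ext G
    simp only [mem_ofPred_eq]
    rw [isFacetOf_iff hn hW.zero_mem]
    constructor
    · rintro ⟨⟨l, hl, rfl⟩, hw⟩
      have hlw := eq_one_of_mem_convexHull_tightSet hw
      obtain ⟨l', hl', hFl', v, hv, hT⟩ := hF.exists_exchange hV hl hlw
      refine ⟨convexHull ℝ (tightSet V l'), v, (isFacetOf_iff hn hV.zero_mem).2 ⟨l', hl', rfl⟩,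
        convexHull_mono hFl', hv, ?_⟩
      rw [inter_convexHull_tightSet, hT]
    · rintro ⟨F', v, hF', hFF', hv, rfl⟩
      obtain ⟨l', hl', rfl⟩ := (isFacetOf_iff hn hV.zero_mem).1 hF'
      have hFl' : ↑F ⊆ tightSet V l' := by
        rw [← inter_convexHull_tightSet]
        exact subset_inter hF.subset ((subset_convexHull _ _).trans hFF')
      obtain ⟨l, hl, hlw, hT⟩ := hF.exists_facet_exchange hn' hV hl' hFl' hv
      rw [inter_convexHull_tightSet, ← hT]
      exact ⟨⟨l, hl, rfl⟩, subset_convexHull _ _ ⟨Or.inl rfl, hlw⟩⟩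

/-- Unimodularly equivalent polytopes have equally many vertices. -/
lemma UnimodularEquiv.ncard_vertexSet_eq {Q P : Set (Fin n → ℝ)} (h : UnimodularEquiv Q P) :
    (vertexSet Q).ncard = (vertexSet P).ncard := by
  obtain ⟨φ, hφ, rfl⟩ := h
  have hlat0 : IsLatticePoint (0 : Fin n → ℝ) := fun i => ⟨0, by simp⟩
  have hsurj : Function.Surjective φ.linear := by
    rw [← LinearMap.range_eq_top, eq_top_iff, ← (Pi.basisFun ℝ (Fin n)).span_eq,
      Submodule.span_le]
    rintro _ ⟨i, rfl⟩
    have hi : IsLatticePoint (Pi.basisFun ℝ (Fin n) i) := fun j => by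
      rw [Pi.basisFun_apply]
      by_cases hij : j = i
      · subst hij; exact ⟨1, by simp⟩
      · exact ⟨0, by simp [hij]⟩
    have h1 : (Pi.basisFun ℝ (Fin n) i) ∈ φ '' {x | IsLatticePoint x} := by rw [hφ]; exact hi
    have h2 : (0 : Fin n → ℝ) ∈ φ '' {x | IsLatticePoint x} := by rw [hφ]; exact hlat0
    obtain ⟨a, -, ha⟩ := h1
    obtain ⟨b, -, hb⟩ := h2
    refine ⟨a - b, ?_⟩
    have := φ.linearMap_vsub a b
    rw [ha, hb] at this
    simpa using this
  have hinj : Function.Injective φ :=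
    φ.linear_injective_iff.1 (LinearMap.injective_iff_surjective.2 hsurj)
  have himg : vertexSet (φ '' Q) = φ '' vertexSet Q := by
    ext y
    simp only [vertexSet, mem_extremePoints]
    constructor
    · rintro ⟨⟨x, hx, rfl⟩, h⟩
      refine ⟨x, mem_extremePoints.2 ⟨hx, fun a ha b hb hab => ?_⟩, rfl⟩
      have := h _ (mem_image_of_mem φ ha) _ (mem_image_of_mem φ hb) (by
        rw [← image_openSegment ℝ φ]; exact mem_image_of_mem φ hab)
      exact ⟨hinj this.1, hinj this.2⟩
    · rintro ⟨x, hx, rfl⟩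
      rw [mem_extremePoints] at hx
      refine ⟨mem_image_of_mem φ hx.1, ?_⟩
      rintro _ ⟨a, ha, rfl⟩ _ ⟨b, hb, rfl⟩ hab
      rw [← image_openSegment ℝ φ] at hab
      obtain ⟨c, hc, hcx⟩ := hab
      have := hx.2 a ha b hb (hinj hcx ▸ hc)
      rw [this.1, this.2]
      exact ⟨rfl, rfl⟩
  rw [himg, ncard_image_of_injective _ hinj]

lemma UnimodularEquiv.refl (P : Set (Fin n → ℝ)) : UnimodularEquiv P P :=
  ⟨AffineMap.id ℝ _, by simp, by simp⟩

lemma not_fIsolated_of_fStep {P Q : Set (Fin n → ℝ)} (hP : IsSmoothFano P) (hQ : IsSmoothFano Q)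
    (h : FStep Q P) (hne : (vertexSet Q).ncard ≠ (vertexSet P).ncard) : ¬ FIsolated P := by
  intro hiso
  refine hne (hiso Q hQ ⟨1, ![Q, P], ?_, UnimodularEquiv.refl _, UnimodularEquiv.refl _,
    ?_⟩).ncard_vertexSet_eq
  · intro i
    fin_cases i
    · exact hQ
    · exact hP
  · intro i
    fin_cases i
    exact h

/-- A polytope which can be blown up is not F-isolated. -/
lemma IsBlowUpCenter.not_fIsolated (hn : 2 ≤ n) (hV : IsSmoothFanoVertexSet V)
    (hF : IsBlowUpCenter V F) : ¬ FIsolated (convexHull ℝ V) := by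
  have hW := hF.isSmoothFanoVertexSet (by omega) hV
  refine not_fIsolated_of_fStep (hV.isSmoothFano hn) (hW.isSmoothFano hn)
    (Or.inr (hF.fStep hn hV)) ?_
  rw [hV.vertexSet_convexHull, hW.vertexSet_convexHull,
    ncard_insert_of_notMem hF.sum_notMem hV.finite]
  omega

/-- A blow-up is not F-isolated. -/
lemma IsBlowUpCenter.not_fIsolated_insert (hn : 2 ≤ n) (hV : IsSmoothFanoVertexSet V)
    (hF : IsBlowUpCenter V F) : ¬ FIsolated (convexHull ℝ (insert (∑ x ∈ F, x) V)) := by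
  have hW := hF.isSmoothFanoVertexSet (by omega) hV
  refine not_fIsolated_of_fStep (hW.isSmoothFano hn) (hV.isSmoothFano hn)
    (Or.inl (hF.fStep hn hV)) ?_
  rw [hV.vertexSet_convexHull, hW.vertexSet_convexHull,
    ncard_insert_of_notMem hF.sum_notMem hV.finite]
  omega

end Stellar

section PrimitiveCollections

variable {n : ℕ} {V : Set (Fin n → ℝ)}

/-- A set of vertices containing no primitive collection lies on a facet. -/
lemma IsSmoothFanoVertexSet.exists_facet_of_forall_not_isPrimitiveCollection
    (hV : IsSmoothFanoVertexSet V) (hcard : n + 1 < V.ncard) {S : Set (Fin n → ℝ)} (hS : S ⊆ V)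
    (hprim : ∀ A ⊆ S, ¬ IsPrimitiveCollection (convexHull ℝ V) A) :
    ∃ l, IsFacetFunctional V l ∧ S ⊆ tightSet V l := by
  induction hk : S.ncard using Nat.strong_induction_on generalizing S with
  | _ k ih =>
  have hSfin := hV.finite.subset hS
  have hface : ∀ x ∈ S, ∃ l, IsFacetFunctional V l ∧ S \ {x} ⊆ tightSet V l := fun x hx =>
    ih _ (hk ▸ ncard_sdiff_singleton_lt_of_mem hx hSfin) (sdiff_subset.trans hS)
      (fun A hA => hprim A (hA.trans sdiff_subset)) rfl
  rcases S.eq_empty_or_nonempty with rfl | hne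
  · obtain ⟨l, hl, -⟩ := exists_isFacetFunctional (l := 0) hV.finite hV.zero_mem (by simp)
    exact ⟨l, hl, empty_subset _⟩
  have hSface : IsFaceOf (convexHull ℝ S) (convexHull ℝ V) := by
    by_contra h
    refine hprim S subset_rfl ⟨hne, hV.vertexSet_convexHull.symm ▸ hS, h, fun x hx => ?_⟩
    obtain ⟨l, hl, hsub⟩ := hface x hx
    exact hV.isFaceOf_convexHull hl hsub
  have hproper : convexHull ℝ S ≠ convexHull ℝ V := by
    intro h
    have hVS : V ⊆ S := by
      rw [← hV.vertexSet_convexHull, ← h]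
      exact extremePoints_convexHull_subset
    obtain ⟨x, hx⟩ := hne
    obtain ⟨l, hl, hsub⟩ := hface x hx
    have h1 := ncard_le_ncard hsub (hV.unimodular l hl).finite
    rw [(hV.unimodular l hl).ncard_eq] at h1
    have h2 := ncard_sdiff_singleton_add_one hx hSfin
    have h3 := ncard_le_ncard hVS hSfin
    omega
  obtain ⟨l, hl, hSl⟩ := exists_functional_of_isExposed hV.zero_mem hSface
    (convexHull_nonempty_iff.2 hne) hproper
  obtain ⟨l', hl', hsub⟩ := exists_isFacetFunctional hV.finite hV.zero_mem hl
  refine ⟨l', hl', Subset.trans ?_ hsub⟩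
  rw [← inter_convexHull_tightSet, ← hSl]
  exact subset_inter hS (subset_convexHull _ _)

lemma IsSmoothFanoVertexSet.not_subset_tightSet (hV : IsSmoothFanoVertexSet V)
    {A : Set (Fin n → ℝ)} (hA : IsPrimitiveCollection (convexHull ℝ V) A)
    {l : (Fin n → ℝ) →ₗ[ℝ] ℝ} (hl : IsFacetFunctional V l) : ¬ A ⊆ tightSet V l :=
  fun h => hA.2.2.1 (hV.isFaceOf_convexHull hl h)

end PrimitiveCollections

section FivePrimitiveCollections

variable {n p0 p1 p2 p3 p4 : ℕ} {V : Set (Fin n → ℝ)}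
  {v : Fin p0 → Fin n → ℝ} {y : Fin p1 → Fin n → ℝ} {z : Fin p2 → Fin n → ℝ}
  {t : Fin p3 → Fin n → ℝ} {u : Fin p4 → Fin n → ℝ} {c : Fin p2 → ℕ} {d : Fin p3 → ℕ}
  {i₀ : Fin p2}

/-- Vertex sets of smooth Fano polytopes with five primitive collections and the given primitive
relations. -/
structure HasFivePrimitiveCollections (V : Set (Fin n → ℝ)) (v : Fin p0 → Fin n → ℝ)
    (y : Fin p1 → Fin n → ℝ) (z : Fin p2 → Fin n → ℝ) (t : Fin p3 → Fin n → ℝ)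
    (u : Fin p4 → Fin n → ℝ) (c : Fin p2 → ℕ) (d : Fin p3 → ℕ) (i₀ : Fin p2) : Prop where
  smooth : IsSmoothFanoVertexSet V
  card : V.ncard = n + 3
  inj : Function.Injective (Sum.elim v (Sum.elim y (Sum.elim z (Sum.elim t u))))
  eq_union : V = range v ∪ range y ∪ range z ∪ range t ∪ range u
  pos0 : 0 < p0
  pos1 : 0 < p1
  pos3 : 0 < p3
  pos4 : 0 < p4
  coeff_zero : c i₀ = 0
  primitive : ∀ B : Set (Fin n → ℝ), IsPrimitiveCollection (convexHull ℝ V) B ↔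
      (B = range v ∪ range y ∨ B = range y ∪ range z ∨
       B = range z ∪ range t ∨ B = range t ∪ range u ∨
       B = range u ∪ range v)
  rel_vy : (∑ i, v i) + (∑ i, y i) = (∑ i, (c i : ℝ) • z i) + ∑ i, ((d i : ℝ) + 1) • t i
  rel_yz : (∑ i, y i) + (∑ i, z i) = ∑ i, u i
  rel_zt : (∑ i, z i) + (∑ i, t i) = 0
  rel_tu : (∑ i, t i) + (∑ i, u i) = ∑ i, y i
  rel_uv : (∑ i, u i) + (∑ i, v i) = (∑ i, (c i : ℝ) • z i) + ∑ i, (d i : ℝ) • t i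

/-- The possible values at the vertices of a functional bounded by `1`. -/
structure IsVertexValuation (c : Fin p2 → ℕ) (d : Fin p3 → ℕ) (lv : Fin p0 → ℝ) (ly : Fin p1 → ℝ)
    (lz : Fin p2 → ℝ) (lt : Fin p3 → ℝ) (lu : Fin p4 → ℝ) : Prop where
  v_le : ∀ i, lv i ≤ 1
  y_le : ∀ i, ly i ≤ 1
  z_le : ∀ i, lz i ≤ 1
  t_le : ∀ i, lt i ≤ 1
  u_le : ∀ i, lu i ≤ 1
  rel_vy : (∑ i, lv i) + (∑ i, ly i) = (∑ i, (c i : ℝ) * lz i) + ∑ i, ((d i : ℝ) + 1) * lt i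
  rel_yz : (∑ i, ly i) + (∑ i, lz i) = ∑ i, lu i
  rel_zt : (∑ i, lz i) + (∑ i, lt i) = 0
  rel_tu : (∑ i, lt i) + (∑ i, lu i) = ∑ i, ly i
  rel_uv : (∑ i, lu i) + (∑ i, lv i) = (∑ i, (c i : ℝ) * lz i) + ∑ i, (d i : ℝ) * lt i

lemma sum_le_of_le_one {p : ℕ} {f : Fin p → ℝ} (h : ∀ i, f i ≤ 1) : ∑ i, f i ≤ p := by
  simpa using Finset.sum_le_sum (fun i (_ : i ∈ Finset.univ) => h i)

lemma sum_eq_of_eq_one {p : ℕ} {f : Fin p → ℝ} (h : ∀ i, f i = 1) : ∑ i, f i = p := by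
  simp [h]

lemma eq_one_of_le_sum {p : ℕ} {f : Fin p → ℝ} (h : ∀ i, f i ≤ 1) (hs : (p : ℝ) ≤ ∑ i, f i) :
    ∀ i, f i = 1 := by
  have h2 : ∑ i, f i = ∑ i : Fin p, 1 :=
    le_antisymm (Finset.sum_le_sum fun i _ => h i) (by simpa using hs)
  exact fun i => (Finset.sum_eq_sum_iff_of_le fun i _ => h i).1 h2 i (Finset.mem_univ i)

lemma sum_mul_le {p : ℕ} {f a : Fin p → ℝ} (ha : ∀ i, 0 ≤ a i) (h : ∀ i, f i ≤ 1) :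
    ∑ i, a i * f i ≤ ∑ i, a i :=
  Finset.sum_le_sum fun i _ => by nlinarith [ha i, h i]

namespace HasFivePrimitiveCollections

lemma v_mem (H : HasFivePrimitiveCollections V v y z t u c d i₀) (i : Fin p0) : v i ∈ V := by
  rw [H.eq_union]; simp
lemma y_mem (H : HasFivePrimitiveCollections V v y z t u c d i₀) (i : Fin p1) : y i ∈ V := by
  rw [H.eq_union]; simp
lemma z_mem (H : HasFivePrimitiveCollections V v y z t u c d i₀) (i : Fin p2) : z i ∈ V := by
  rw [H.eq_union]; simp
lemma t_mem (H : HasFivePrimitiveCollections V v y z t u c d i₀) (i : Fin p3) : t i ∈ V := by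
  rw [H.eq_union]; simp
lemma u_mem (H : HasFivePrimitiveCollections V v y z t u c d i₀) (i : Fin p4) : u i ∈ V := by
  rw [H.eq_union]; simp

end HasFivePrimitiveCollections

end FivePrimitiveCollections

section BlowUpCriterion

variable {n p0 p1 p2 p3 p4 : ℕ} {V : Set (Fin n → ℝ)}
  {v : Fin p0 → Fin n → ℝ} {y : Fin p1 → Fin n → ℝ} {z : Fin p2 → Fin n → ℝ}
  {t : Fin p3 → Fin n → ℝ} {u : Fin p4 → Fin n → ℝ} {c : Fin p2 → ℕ} {d : Fin p3 → ℕ}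
  {i₀ : Fin p2} {lv : Fin p0 → ℝ} {ly : Fin p1 → ℝ} {lz : Fin p2 → ℝ} {lt : Fin p3 → ℝ}
  {lu : Fin p4 → ℝ}

namespace HasFivePrimitiveCollections

lemma exists_facet_of_not_subset (H : HasFivePrimitiveCollections V v y z t u c d i₀)
    {S : Set (Fin n → ℝ)} (hS : S ⊆ V)
    (hvy : ¬ range v ∪ range y ⊆ S) (hyz : ¬ range y ∪ range z ⊆ S)
    (hzt : ¬ range z ∪ range t ⊆ S) (htu : ¬ range t ∪ range u ⊆ S)
    (huv : ¬ range u ∪ range v ⊆ S) : ∃ l, IsFacetFunctional V l ∧ S ⊆ tightSet V l := by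
  refine H.smooth.exists_facet_of_forall_not_isPrimitiveCollection (by rw [H.card]; omega) hS ?_
  intro A hA hprim
  rcases (H.primitive A).1 hprim with rfl | rfl | rfl | rfl | rfl
  exacts [hvy hA, hyz hA, hzt hA, htu hA, huv hA]

lemma isVertexValuation (H : HasFivePrimitiveCollections V v y z t u c d i₀)
    {l : (Fin n → ℝ) →ₗ[ℝ] ℝ} (hl : ∀ x ∈ V, l x ≤ 1) :
    IsVertexValuation c d (fun i => l (v i)) (fun i => l (y i)) (fun i => l (z i))
      (fun i => l (t i)) (fun i => l (u i)) where
  v_le i := hl _ (H.v_mem i)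
  y_le i := hl _ (H.y_mem i)
  z_le i := hl _ (H.z_mem i)
  t_le i := hl _ (H.t_mem i)
  u_le i := hl _ (H.u_mem i)
  rel_vy := by simpa using congrArg l H.rel_vy
  rel_yz := by simpa using congrArg l H.rel_yz
  rel_zt := by simpa using congrArg l H.rel_zt
  rel_tu := by simpa using congrArg l H.rel_tu
  rel_uv := by simpa using congrArg l H.rel_uv

lemma elim_mem (H : HasFivePrimitiveCollections V v y z t u c d i₀)
    (x : Fin p0 ⊕ Fin p1 ⊕ Fin p2 ⊕ Fin p3 ⊕ Fin p4) :
    Sum.elim v (Sum.elim y (Sum.elim z (Sum.elim t u))) x ∈ V := by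
  rcases x with i | i | i | i | i
  exacts [H.v_mem i, H.y_mem i, H.z_mem i, H.t_mem i, H.u_mem i]

/-- A criterion for the sum of a set of vertices to be the centre of a blow-up. -/
lemma isBlowUpCenter (H : HasFivePrimitiveCollections V v y z t u c d i₀)
    (Fv : Finset (Fin p0)) (Fy : Finset (Fin p1)) (Fz : Finset (Fin p2)) (Ft : Finset (Fin p3))
    (Fu : Finset (Fin p4))
    (hcard : 1 < Fv.card + (Fy.card + (Fz.card + (Ft.card + Fu.card))))
    (hvy : Fv ≠ Finset.univ ∨ Fy ≠ Finset.univ) (hyz : Fy ≠ Finset.univ ∨ Fz ≠ Finset.univ)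
    (hzt : Fz ≠ Finset.univ ∨ Ft ≠ Finset.univ) (htu : Ft ≠ Finset.univ ∨ Fu ≠ Finset.univ)
    (huv : Fu ≠ Finset.univ ∨ Fv ≠ Finset.univ)
    (hval : ∀ lv ly lz lt lu, IsVertexValuation c d lv ly lz lt lu →
      ∑ i ∈ Fv, lv i + (∑ i ∈ Fy, ly i + (∑ i ∈ Fz, lz i + (∑ i ∈ Ft, lt i + ∑ i ∈ Fu, lu i))) = 1 →
      ((∀ i ∉ Fv, lv i = 1) → (∀ i ∉ Fy, ly i = 1) → False) ∧
      ((∀ i ∉ Fy, ly i = 1) → (∀ i ∉ Fz, lz i = 1) → False) ∧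
      ((∀ i ∉ Fz, lz i = 1) → (∀ i ∉ Ft, lt i = 1) → False) ∧
      ((∀ i ∉ Ft, lt i = 1) → (∀ i ∉ Fu, lu i = 1) → False) ∧
      ((∀ i ∉ Fu, lu i = 1) → (∀ i ∉ Fv, lv i = 1) → False)) :
    ∃ F, IsBlowUpCenter V F := by
  set e : Fin p0 ⊕ Fin p1 ⊕ Fin p2 ⊕ Fin p3 ⊕ Fin p4 ↪ (Fin n → ℝ) := ⟨_, H.inj⟩ with he
  set s := Fv.disjSum (Fy.disjSum (Fz.disjSum (Ft.disjSum Fu)))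
  have hv (i) : v i ∈ s.map e ↔ i ∈ Fv := by
    rw [show v i = e (Sum.inl i) from rfl, Finset.mem_map']; simp [s]
  have hy (i) : y i ∈ s.map e ↔ i ∈ Fy := by
    rw [show y i = e (Sum.inr (Sum.inl i)) from rfl, Finset.mem_map']; simp [s]
  have hz (i) : z i ∈ s.map e ↔ i ∈ Fz := by
    rw [show z i = e (Sum.inr (Sum.inr (Sum.inl i))) from rfl, Finset.mem_map']; simp [s]
  have ht (i) : t i ∈ s.map e ↔ i ∈ Ft := by
    rw [show t i = e (Sum.inr (Sum.inr (Sum.inr (Sum.inl i)))) from rfl, Finset.mem_map']; simp [s]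
  have hu (i) : u i ∈ s.map e ↔ i ∈ Fu := by
    rw [show u i = e (Sum.inr (Sum.inr (Sum.inr (Sum.inr i)))) from rfl, Finset.mem_map']; simp [s]
  have hFV : (↑(s.map e) : Set (Fin n → ℝ)) ⊆ V := by
    intro x hx
    obtain ⟨a, -, rfl⟩ := Finset.mem_map.1 (Finset.mem_coe.1 hx)
    exact H.elim_mem a
  have hsum : ∑ x ∈ s.map e, x = ∑ i ∈ Fv, v i + (∑ i ∈ Fy, y i + (∑ i ∈ Fz, z i +
      (∑ i ∈ Ft, t i + ∑ i ∈ Fu, u i))) := by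
    rw [Finset.sum_map]
    simp [s, e, Finset.sum_disjSum]
  refine ⟨s.map e, ?_, ?_, ?_⟩
  · simpa [s, Finset.card_disjSum] using hcard
  · apply H.exists_facet_of_not_subset hFV
    all_goals
      simp only [union_subset_iff, range_subset_iff, Finset.mem_coe, hv, hy, hz, ht, hu,
        ← Finset.eq_univ_iff_forall, not_and_or]
      assumption
  · intro l hl hl1
    rw [hsum] at hl1
    obtain ⟨k1, k2, k3, k4, k5⟩ := hval _ _ _ _ _ (H.isVertexValuation hl)
      (by simpa [map_sum] using hl1)
    have key : ∀ {p : ℕ} {w : Fin p → Fin n → ℝ} {Fw : Finset (Fin p)},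
        (∀ i, w i ∈ s.map e ↔ i ∈ Fw) → (∀ i, w i ∈ (↑(s.map e) : Set _) ∪ tightSet V l) →
        ∀ i ∉ Fw, l (w i) = 1 := by
      intro p w Fw hw h i hi
      rcases h i with h' | h'
      · exact absurd ((hw i).1 h') hi
      · exact h'.2
    obtain ⟨l', hl', hsub⟩ := H.exists_facet_of_not_subset
      (S := ↑(s.map e) ∪ tightSet V l) (union_subset hFV tightSet_subset)
      (by simp only [union_subset_iff, range_subset_iff]; exact fun h =>
        k1 (key hv h.1) (key hy h.2))
      (by simp only [union_subset_iff, range_subset_iff]; exact fun h =>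
        k2 (key hy h.1) (key hz h.2))
      (by simp only [union_subset_iff, range_subset_iff]; exact fun h =>
        k3 (key hz h.1) (key ht h.2))
      (by simp only [union_subset_iff, range_subset_iff]; exact fun h =>
        k4 (key ht h.1) (key hu h.2))
      (by simp only [union_subset_iff, range_subset_iff]; exact fun h =>
        k5 (key hu h.1) (key hv h.2))
    exact ⟨l', hl', subset_union_left.trans hsub, subset_union_right.trans hsub⟩

lemma exists_facet_range_y (H : HasFivePrimitiveCollections V v y z t u c d i₀) :
    ∃ l, IsFacetFunctional V l ∧ ∀ i, l (y i) = 1 := by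
  have hne (a b) (h : a ≠ b) := H.inj.ne (a₁ := a) (a₂ := b) h
  have hz : z i₀ ∉ range y := by
    rintro ⟨i, hi⟩; exact hne (.inr (.inl i)) (.inr (.inr (.inl i₀))) (by simp) hi
  have hv : v ⟨0, H.pos0⟩ ∉ range y := by
    rintro ⟨i, hi⟩; exact hne (.inr (.inl i)) (.inl ⟨0, H.pos0⟩) (by simp) hi
  have hu : u ⟨0, H.pos4⟩ ∉ range y := by
    rintro ⟨i, hi⟩
    exact hne (.inr (.inl i)) (.inr (.inr (.inr (.inr ⟨0, H.pos4⟩)))) (by simp) hi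
  obtain ⟨l, hl, hsub⟩ := H.exists_facet_of_not_subset (S := range y)
    (range_subset_iff.2 H.y_mem)
    (fun h => hv (h (Or.inl ⟨_, rfl⟩))) (fun h => hz (h (Or.inr ⟨_, rfl⟩)))
    (fun h => hz (h (Or.inl ⟨_, rfl⟩))) (fun h => hu (h (Or.inr ⟨_, rfl⟩)))
    (fun h => hu (h (Or.inl ⟨_, rfl⟩)))
  exact ⟨l, hl, fun i => (hsub ⟨i, rfl⟩).2⟩

lemma exists_facet_range_u (H : HasFivePrimitiveCollections V v y z t u c d i₀) :
    ∃ l, IsFacetFunctional V l ∧ ∀ i, l (u i) = 1 := by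
  have hne (a b) (h : a ≠ b) := H.inj.ne (a₁ := a) (a₂ := b) h
  have hz : z i₀ ∉ range u := by
    rintro ⟨i, hi⟩
    exact hne (.inr (.inr (.inr (.inr i)))) (.inr (.inr (.inl i₀))) (by simp) hi
  have hv : v ⟨0, H.pos0⟩ ∉ range u := by
    rintro ⟨i, hi⟩; exact hne (.inr (.inr (.inr (.inr i)))) (.inl ⟨0, H.pos0⟩) (by simp) hi
  have ht : t ⟨0, H.pos3⟩ ∉ range u := by
    rintro ⟨i, hi⟩
    exact hne (.inr (.inr (.inr (.inr i)))) (.inr (.inr (.inr (.inl ⟨0, H.pos3⟩)))) (by simp) hi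
  obtain ⟨l, hl, hsub⟩ := H.exists_facet_of_not_subset (S := range u)
    (range_subset_iff.2 H.u_mem)
    (fun h => hv (h (Or.inl ⟨_, rfl⟩))) (fun h => hz (h (Or.inr ⟨_, rfl⟩)))
    (fun h => hz (h (Or.inl ⟨_, rfl⟩))) (fun h => ht (h (Or.inl ⟨_, rfl⟩)))
    (fun h => hv (h (Or.inr ⟨_, rfl⟩)))
  exact ⟨l, hl, fun i => (hsub ⟨i, rfl⟩).2⟩

lemma exists_facet_range_t (H : HasFivePrimitiveCollections V v y z t u c d i₀) :
    ∃ l, IsFacetFunctional V l ∧ (∀ i, i ≠ i₀ → l (z i) = 1) ∧ ∀ i, l (t i) = 1 := by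
  have hne (a b) (h : a ≠ b) := H.inj.ne (a₁ := a) (a₂ := b) h
  set S := z '' {i | i ≠ i₀} ∪ range t with hSdef
  have hz : z i₀ ∉ S := by
    rintro (⟨i, hi, h⟩ | ⟨i, h⟩)
    · exact hne (.inr (.inr (.inl i))) (.inr (.inr (.inl i₀))) (by simpa using hi) h
    · exact hne (.inr (.inr (.inr (.inl i)))) (.inr (.inr (.inl i₀))) (by simp) h
  have hv : v ⟨0, H.pos0⟩ ∉ S := by
    rintro (⟨i, hi, h⟩ | ⟨i, h⟩)
    · exact hne (.inr (.inr (.inl i))) (.inl ⟨0, H.pos0⟩) (by simp) h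
    · exact hne (.inr (.inr (.inr (.inl i)))) (.inl ⟨0, H.pos0⟩) (by simp) h
  have hu : u ⟨0, H.pos4⟩ ∉ S := by
    rintro (⟨i, hi, h⟩ | ⟨i, h⟩)
    · exact hne (.inr (.inr (.inl i))) (.inr (.inr (.inr (.inr ⟨0, H.pos4⟩)))) (by simp) h
    · exact hne (.inr (.inr (.inr (.inl i)))) (.inr (.inr (.inr (.inr ⟨0, H.pos4⟩)))) (by simp) h
  obtain ⟨l, hl, hsub⟩ := H.exists_facet_of_not_subset (S := S)
    (union_subset (image_subset_iff.2 fun i _ => H.z_mem i) (range_subset_iff.2 H.t_mem))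
    (fun h => hv (h (Or.inl ⟨_, rfl⟩))) (fun h => hz (h (Or.inr ⟨_, rfl⟩)))
    (fun h => hz (h (Or.inl ⟨_, rfl⟩))) (fun h => hu (h (Or.inr ⟨_, rfl⟩)))
    (fun h => hv (h (Or.inr ⟨_, rfl⟩)))
  exact ⟨l, hl, fun i hi => (hsub (Or.inl ⟨i, hi, rfl⟩)).2, fun i => (hsub (Or.inr ⟨i, rfl⟩)).2⟩

lemma not_forall_eq_one (H : HasFivePrimitiveCollections V v y z t u c d i₀)
    {p q : ℕ} {a : Fin p → Fin n → ℝ} {b : Fin q → Fin n → ℝ}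
    (hprim : IsPrimitiveCollection (convexHull ℝ V) (range a ∪ range b))
    {l : (Fin n → ℝ) →ₗ[ℝ] ℝ} (hl : IsFacetFunctional V l) (ha : ∀ i, l (a i) = 1)
    (hb : ∀ i, l (b i) = 1) : False := by
  have hsub := hprim.2.1
  rw [H.smooth.vertexSet_convexHull] at hsub
  refine H.smooth.not_subset_tightSet hprim hl ?_
  rintro _ (⟨i, rfl⟩ | ⟨i, rfl⟩)
  · exact ⟨hsub (Or.inl ⟨i, rfl⟩), ha i⟩
  · exact ⟨hsub (Or.inr ⟨i, rfl⟩), hb i⟩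

lemma p4_lt (H : HasFivePrimitiveCollections V v y z t u c d i₀) : p4 < p1 + p2 := by
  by_contra! h
  obtain ⟨l, hl, hlu⟩ := H.exists_facet_range_u
  have hval := H.isVertexValuation hl.1
  have h1 := hval.rel_yz
  rw [sum_eq_of_eq_one hlu] at h1
  have hy := sum_le_of_le_one hval.y_le
  have hz := sum_le_of_le_one hval.z_le
  have h' : (p1 : ℝ) + p2 ≤ p4 := by exact_mod_cast h
  exact H.not_forall_eq_one ((H.primitive _).2 (by simp)) hl
    (eq_one_of_le_sum hval.y_le (by linarith)) (eq_one_of_le_sum hval.z_le (by linarith))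

lemma p1_lt (H : HasFivePrimitiveCollections V v y z t u c d i₀) : p1 < p3 + p4 := by
  by_contra! h
  obtain ⟨l, hl, hly⟩ := H.exists_facet_range_y
  have hval := H.isVertexValuation hl.1
  have h1 := hval.rel_tu
  rw [sum_eq_of_eq_one hly] at h1
  have ht := sum_le_of_le_one hval.t_le
  have hu := sum_le_of_le_one hval.u_le
  have h' : (p3 : ℝ) + p4 ≤ p1 := by exact_mod_cast h
  exact H.not_forall_eq_one ((H.primitive _).2 (by simp)) hl
    (eq_one_of_le_sum hval.t_le (by linarith)) (eq_one_of_le_sum hval.u_le (by linarith))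

lemma sum_coeff_vy_lt (H : HasFivePrimitiveCollections V v y z t u c d i₀) :
    (∑ i, (c i : ℝ)) + ∑ i, ((d i : ℝ) + 1) < p0 + p1 := by
  by_contra! h
  obtain ⟨l, hl, hlz, hlt⟩ := H.exists_facet_range_t
  have hval := H.isVertexValuation hl.1
  have h1 := hval.rel_vy
  have hz : ∑ i, (c i : ℝ) * l (z i) = ∑ i, (c i : ℝ) := by
    refine Finset.sum_congr rfl fun i _ => ?_
    by_cases hi : i = i₀
    · simp [hi, H.coeff_zero]
    · simp [hlz i hi]
  simp only [hz, hlt, mul_one] at h1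
  have hv := sum_le_of_le_one hval.v_le
  have hy := sum_le_of_le_one hval.y_le
  exact H.not_forall_eq_one ((H.primitive _).2 (by simp)) hl
    (eq_one_of_le_sum hval.v_le (by linarith)) (eq_one_of_le_sum hval.y_le (by linarith))

lemma sum_coeff_uv_lt (H : HasFivePrimitiveCollections V v y z t u c d i₀) :
    (∑ i, (c i : ℝ)) + ∑ i, (d i : ℝ) < p4 + p0 := by
  by_contra! h
  obtain ⟨l, hl, hlz, hlt⟩ := H.exists_facet_range_t
  have hval := H.isVertexValuation hl.1
  have h1 := hval.rel_uv
  have hz : ∑ i, (c i : ℝ) * l (z i) = ∑ i, (c i : ℝ) := by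
    refine Finset.sum_congr rfl fun i _ => ?_
    by_cases hi : i = i₀
    · simp [hi, H.coeff_zero]
    · simp [hlz i hi]
  simp only [hz, hlt, mul_one] at h1
  have hv := sum_le_of_le_one hval.v_le
  have hu := sum_le_of_le_one hval.u_le
  exact H.not_forall_eq_one ((H.primitive _).2 (by simp)) hl
    (eq_one_of_le_sum hval.u_le (by linarith)) (eq_one_of_le_sum hval.v_le (by linarith))

lemma not_eq_one_vy (H : HasFivePrimitiveCollections V v y z t u c d i₀)
    (hval : IsVertexValuation c d lv ly lz lt lu) (hv : ∀ i, lv i = 1) (hy : ∀ i, ly i = 1) :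
    False := by
  have h := hval.rel_vy
  rw [sum_eq_of_eq_one hv, sum_eq_of_eq_one hy] at h
  have h1 := sum_mul_le (fun i => Nat.cast_nonneg (c i)) hval.z_le
  have h2 := sum_mul_le (a := fun i => (d i : ℝ) + 1) (fun i => by positivity) hval.t_le
  linarith [H.sum_coeff_vy_lt]

lemma not_eq_one_uv (H : HasFivePrimitiveCollections V v y z t u c d i₀)
    (hval : IsVertexValuation c d lv ly lz lt lu) (hu : ∀ i, lu i = 1) (hv : ∀ i, lv i = 1) :
    False := by
  have h := hval.rel_uv
  rw [sum_eq_of_eq_one hv, sum_eq_of_eq_one hu] at h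
  have h1 := sum_mul_le (fun i => Nat.cast_nonneg (c i)) hval.z_le
  have h2 := sum_mul_le (fun i => Nat.cast_nonneg (d i)) hval.t_le
  linarith [H.sum_coeff_uv_lt]

lemma not_eq_one_yz (H : HasFivePrimitiveCollections V v y z t u c d i₀)
    (hval : IsVertexValuation c d lv ly lz lt lu) (hy : ∀ i, ly i = 1) (hz : ∀ i, lz i = 1) :
    False := by
  have h := hval.rel_yz
  rw [sum_eq_of_eq_one hy, sum_eq_of_eq_one hz] at h
  have h1 := sum_le_of_le_one hval.u_le
  have h2 : (p4 : ℝ) < p1 + p2 := by exact_mod_cast H.p4_lt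
  linarith

lemma not_eq_one_tu (H : HasFivePrimitiveCollections V v y z t u c d i₀)
    (hval : IsVertexValuation c d lv ly lz lt lu) (ht : ∀ i, lt i = 1) (hu : ∀ i, lu i = 1) :
    False := by
  have h := hval.rel_tu
  rw [sum_eq_of_eq_one ht, sum_eq_of_eq_one hu] at h
  have h1 := sum_le_of_le_one hval.y_le
  have h2 : (p1 : ℝ) < p3 + p4 := by exact_mod_cast H.p1_lt
  linarith

lemma not_eq_one_zt (H : HasFivePrimitiveCollections V v y z t u c d i₀)
    (hval : IsVertexValuation c d lv ly lz lt lu) (hz : ∀ i, lz i = 1) (ht : ∀ i, lt i = 1) :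
    False := by
  have h := hval.rel_zt
  rw [sum_eq_of_eq_one hz, sum_eq_of_eq_one ht] at h
  have h1 : (0 : ℝ) < p3 := by exact_mod_cast H.pos3
  have h2 : (0 : ℝ) ≤ p2 := Nat.cast_nonneg _
  linarith

end HasFivePrimitiveCollections

end BlowUpCriterion

section BlowUpCenters

variable {n p0 p1 p2 p3 p4 : ℕ} {V : Set (Fin n → ℝ)}
  {v : Fin p0 → Fin n → ℝ} {y : Fin p1 → Fin n → ℝ} {z : Fin p2 → Fin n → ℝ}
  {t : Fin p3 → Fin n → ℝ} {u : Fin p4 → Fin n → ℝ} {c : Fin p2 → ℕ} {d : Fin p3 → ℕ}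
  {i₀ : Fin p2}

lemma empty_ne_univ_of_pos {p : ℕ} (h : 0 < p) : (∅ : Finset (Fin p)) ≠ Finset.univ :=
  fun h' => Finset.notMem_empty (⟨0, h⟩ : Fin p) (h' ▸ Finset.mem_univ _)

lemma singleton_ne_univ {p : ℕ} (h : 2 ≤ p) (i : Fin p) : ({i} : Finset (Fin p)) ≠ Finset.univ := by
  intro h'
  have := congrArg Finset.card h'
  rw [Finset.card_singleton, Finset.card_fin] at this
  omega

lemma sum_eq_add_sub_one {p : ℕ} {f : Fin p → ℝ} (i : Fin p) (h : ∀ j, j ≠ i → f j = 1) :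
    ∑ j, f j = f i + (p - 1) := by
  rw [← Finset.add_sum_erase _ _ (Finset.mem_univ i),
    Finset.sum_congr rfl fun j hj => h j (Finset.ne_of_mem_erase hj)]
  simp [Nat.cast_pred i.pos]

namespace HasFivePrimitiveCollections

lemma exists_isBlowUpCenter_z (H : HasFivePrimitiveCollections V v y z t u c d i₀)
    (h2 : 2 ≤ p2) (h : p4 ≤ p1) : ∃ F, IsBlowUpCenter V F := by
  have e0 := empty_ne_univ_of_pos H.pos0
  have e1 := empty_ne_univ_of_pos H.pos1
  have e3 := empty_ne_univ_of_pos H.pos3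
  have e4 := empty_ne_univ_of_pos H.pos4
  refine H.isBlowUpCenter ∅ ∅ Finset.univ ∅ ∅ (by simp; omega) (.inl e0) (.inl e1) (.inr e3)
    (.inl e3) (.inl e4) fun lv ly lz lt lu hval hs => ?_
  simp only [Finset.sum_empty, zero_add, add_zero, Finset.notMem_empty, not_false_eq_true,
    forall_const, Finset.mem_univ, not_true, IsEmpty.forall_iff] at hs ⊢
  refine ⟨H.not_eq_one_vy hval, fun hy => ?_, fun ht => ?_, H.not_eq_one_tu hval,
    H.not_eq_one_uv hval⟩
  · have h1 := hval.rel_yz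
    rw [sum_eq_of_eq_one hy, hs] at h1
    have h3 := sum_le_of_le_one hval.u_le
    have h4 : (p4 : ℝ) ≤ p1 := by exact_mod_cast h
    linarith
  · have h1 := hval.rel_zt
    rw [sum_eq_of_eq_one ht, hs] at h1
    have h3 : (0 : ℝ) ≤ p3 := Nat.cast_nonneg _
    linarith

lemma exists_isBlowUpCenter_t (H : HasFivePrimitiveCollections V v y z t u c d i₀)
    (h3 : 2 ≤ p3) (h : p1 ≤ p4) : ∃ F, IsBlowUpCenter V F := by
  have e0 := empty_ne_univ_of_pos H.pos0
  have e1 := empty_ne_univ_of_pos H.pos1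
  have e2 := empty_ne_univ_of_pos i₀.pos
  have e4 := empty_ne_univ_of_pos H.pos4
  refine H.isBlowUpCenter ∅ ∅ ∅ Finset.univ ∅ (by simp; omega) (.inl e0) (.inl e1) (.inl e2)
    (.inr e4) (.inl e4) fun lv ly lz lt lu hval hs => ?_
  simp only [Finset.sum_empty, zero_add, add_zero, Finset.notMem_empty, not_false_eq_true,
    forall_const, Finset.mem_univ, not_true, IsEmpty.forall_iff] at hs ⊢
  refine ⟨H.not_eq_one_vy hval, H.not_eq_one_yz hval, fun hz => ?_, fun hu => ?_,
    H.not_eq_one_uv hval⟩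
  · have h1 := hval.rel_zt
    rw [sum_eq_of_eq_one hz, hs] at h1
    have h3 : (0 : ℝ) ≤ p2 := Nat.cast_nonneg _
    linarith
  · have h1 := hval.rel_tu
    rw [sum_eq_of_eq_one hu, hs] at h1
    have h3 := sum_le_of_le_one hval.y_le
    have h4 : (p1 : ℝ) ≤ p4 := by exact_mod_cast h
    linarith

lemma exists_isBlowUpCenter_z_t (H : HasFivePrimitiveCollections V v y z t u c d i₀)
    (h2 : 2 ≤ p2) (h : p1 < p4) : ∃ F, IsBlowUpCenter V F := by
  have e0 := empty_ne_univ_of_pos H.pos0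
  have e1 := empty_ne_univ_of_pos H.pos1
  have e2 := singleton_ne_univ h2 i₀
  have e4 := empty_ne_univ_of_pos H.pos4
  have h3 := H.pos3
  refine H.isBlowUpCenter ∅ ∅ {i₀} Finset.univ ∅ (by simp; omega) (.inl e0) (.inl e1) (.inl e2)
    (.inr e4) (.inl e4) fun lv ly lz lt lu hval hs => ?_
  simp only [Finset.sum_empty, zero_add, add_zero, Finset.notMem_empty, not_false_eq_true,
    forall_const, Finset.mem_univ, not_true, IsEmpty.forall_iff, Finset.sum_singleton,
    Finset.mem_singleton] at hs ⊢
  have hzt : (∀ i, ¬ i = i₀ → lz i = 1) → False := fun hz => by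
    have h1 := hval.rel_zt
    rw [sum_eq_add_sub_one i₀ hz] at h1
    have h3 : (2 : ℝ) ≤ p2 := by exact_mod_cast h2
    linarith
  refine ⟨H.not_eq_one_vy hval, fun _ => hzt, hzt, fun hu => ?_,
    H.not_eq_one_uv hval⟩
  have h1 := hval.rel_tu
  rw [sum_eq_of_eq_one hu] at h1
  have h3 := sum_le_of_le_one hval.y_le
  have h4 : (p1 : ℝ) < p4 := by exact_mod_cast h
  linarith [hval.z_le i₀]

lemma exists_isBlowUpCenter_t_z (H : HasFivePrimitiveCollections V v y z t u c d i₀)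
    (h3 : 2 ≤ p3) (h : p4 < p1) : ∃ F, IsBlowUpCenter V F := by
  have e0 := empty_ne_univ_of_pos H.pos0
  have e1 := empty_ne_univ_of_pos H.pos1
  have e3 := singleton_ne_univ h3 ⟨0, H.pos3⟩
  have e4 := empty_ne_univ_of_pos H.pos4
  have h2 := i₀.pos
  refine H.isBlowUpCenter ∅ ∅ Finset.univ {⟨0, H.pos3⟩} ∅ (by simp; omega) (.inl e0) (.inl e1)
    (.inr e3) (.inr e4) (.inl e4) fun lv ly lz lt lu hval hs => ?_
  simp only [Finset.sum_empty, zero_add, add_zero, Finset.notMem_empty, not_false_eq_true,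
    forall_const, Finset.mem_univ, not_true, IsEmpty.forall_iff, Finset.sum_singleton,
    Finset.mem_singleton] at hs ⊢
  have hzt : (∀ i, ¬ i = ⟨0, H.pos3⟩ → lt i = 1) → False := fun ht => by
    have h1 := hval.rel_zt
    rw [sum_eq_add_sub_one _ ht] at h1
    have h3 : (2 : ℝ) ≤ p3 := by exact_mod_cast h3
    linarith
  refine ⟨H.not_eq_one_vy hval, fun hy => ?_, hzt, fun ht _ => hzt ht,
    H.not_eq_one_uv hval⟩
  have h1 := hval.rel_yz
  rw [sum_eq_of_eq_one hy] at h1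
  have h3 := sum_le_of_le_one hval.u_le
  have h4 : (p4 : ℝ) < p1 := by exact_mod_cast h
  linarith [hval.t_le ⟨0, H.pos3⟩]

end HasFivePrimitiveCollections

namespace HasFivePrimitiveCollections

variable {p : ℕ} {y : Fin p → Fin n → ℝ} {z t : Fin 1 → Fin n → ℝ} {u : Fin p → Fin n → ℝ}
  {c d : Fin 1 → ℕ} {i₀ : Fin 1}

lemma coeff_add_one_lt (H : HasFivePrimitiveCollections V v y z t u c d i₀) : d 0 + 1 < p0 + p := by
  have h := H.sum_coeff_vy_lt
  have hc : c 0 = 0 := Subsingleton.elim i₀ 0 ▸ H.coeff_zero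
  simp only [Finset.univ_unique, Fin.default_eq_zero, Fin.isValue, Finset.sum_singleton, hc] at h
  exact_mod_cast (show ((d 0 : ℝ) + 1) < p0 + p by simpa using h)

lemma valuation_relations (H : HasFivePrimitiveCollections V v y z t u c d i₀)
    {lv : Fin p0 → ℝ} {ly : Fin p → ℝ} {lz lt : Fin 1 → ℝ} {lu : Fin p → ℝ}
    (hval : IsVertexValuation c d lv ly lz lt lu) :
    ∑ i, lv i + ∑ i, ly i = (d 0 + 1) * lt 0 ∧ lz 0 = - lt 0 ∧
      ∑ i, lu i + ∑ i, lv i = d 0 * lt 0 := by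
  have hc : c 0 = 0 := Subsingleton.elim i₀ 0 ▸ H.coeff_zero
  have h1 := hval.rel_vy
  have h2 := hval.rel_zt
  have h3 := hval.rel_uv
  simp only [Finset.univ_unique, Fin.default_eq_zero, Fin.isValue, Finset.sum_singleton, hc,
    Nat.cast_zero, zero_mul, zero_add] at h1 h2 h3
  exact ⟨h1, by linarith, h3⟩

lemma exists_isBlowUpCenter_v_z {v : Fin 1 → Fin n → ℝ}
    (H : HasFivePrimitiveCollections V v y z t u c d i₀) : ∃ F, IsBlowUpCenter V F := by
  have e1 := empty_ne_univ_of_pos H.pos1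
  have e3 := empty_ne_univ_of_pos H.pos3
  refine H.isBlowUpCenter Finset.univ ∅ Finset.univ ∅ ∅ (by simp) (.inr e1) (.inl e1)
    (.inr e3) (.inl e3) (.inl e1) fun lv ly lz lt lu hval hs => ?_
  obtain ⟨r1, r2, r3⟩ := H.valuation_relations hval
  simp only [Finset.univ_unique, Fin.default_eq_zero, Fin.isValue, Finset.sum_singleton,
    Finset.sum_empty, zero_add, add_zero] at r1 r3 hs
  have hd : (d 0 : ℝ) + 1 ≤ p := by
    have := H.coeff_add_one_lt
    exact_mod_cast (by omega : d 0 + 1 ≤ p)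
  have hd0 : (0 : ℝ) ≤ d 0 := Nat.cast_nonneg _
  have ht := hval.t_le 0
  have hv := hval.v_le 0
  have hz := hval.z_le 0
  have hvy : (∀ i, ly i = 1) → False := fun hy => by
    rw [sum_eq_of_eq_one hy] at r1
    nlinarith
  have hzt : (∀ i, lt i = 1) → False := fun ht => by
    rw [ht 0] at r2
    linarith
  simp only [Finset.notMem_empty, not_false_eq_true, forall_const]
  refine ⟨fun _ => hvy, fun hy _ => hvy hy, fun _ => hzt, fun ht _ => hzt ht, fun hu _ => ?_⟩
  rw [sum_eq_of_eq_one hu] at r3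
  have hd' : d 0 = 0 ∨ 1 ≤ d 0 := by omega
  rcases hd' with h | h
  · simp only [h, Nat.cast_zero, zero_mul] at r3 hd
    linarith
  · have h' : (1 : ℝ) ≤ d 0 := by exact_mod_cast h
    nlinarith

lemma exists_isBlowUpCenter_v_v (H : HasFivePrimitiveCollections V v y z t u c d i₀)
    (h0 : 2 ≤ p0) (hd : d 0 + 2 < p0 + p) : ∃ F, IsBlowUpCenter V F := by
  have e1 := empty_ne_univ_of_pos H.pos1
  have e3 := empty_ne_univ_of_pos H.pos3
  have hne : (⟨0, by omega⟩ : Fin p0) ≠ ⟨1, by omega⟩ := by simp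
  refine H.isBlowUpCenter {⟨0, by omega⟩, ⟨1, by omega⟩} ∅ ∅ ∅ ∅
    (by simp [Finset.card_pair hne]) (.inr e1) (.inl e1) (.inl e3) (.inl e3) (.inl e1)
    fun lv ly lz lt lu hval hs => ?_
  obtain ⟨r1, r2, r3⟩ := H.valuation_relations hval
  rw [Finset.sum_pair hne] at hs
  simp only [Finset.sum_empty, add_zero] at hs
  have hd : (d 0 : ℝ) + 3 ≤ p0 + p := by exact_mod_cast hd
  have hd0 : (0 : ℝ) ≤ d 0 := Nat.cast_nonneg _
  have ht := hval.t_le 0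
  have hv : (∀ i ∉ ({⟨0, by omega⟩, ⟨1, by omega⟩} : Finset (Fin p0)), lv i = 1) →
      ∑ i, lv i = p0 - 1 := fun h => by
    rw [← Finset.sum_add_sum_compl {⟨0, by omega⟩, ⟨1, by omega⟩}, Finset.sum_pair hne, hs,
      Finset.sum_congr rfl fun i hi => h i (Finset.mem_compl.1 hi), Finset.sum_const,
      Finset.card_compl, Finset.card_pair hne, Fintype.card_fin, nsmul_eq_mul, mul_one,
      Nat.cast_sub h0]
    push_cast
    ring
  simp only [Finset.notMem_empty, not_false_eq_true, forall_const]
  refine ⟨fun h hy => ?_, H.not_eq_one_yz hval, H.not_eq_one_zt hval, H.not_eq_one_tu hval,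
    fun hu h => ?_⟩
  · rw [hv h, sum_eq_of_eq_one hy] at r1
    nlinarith
  · rw [hv h, sum_eq_of_eq_one hu] at r3
    nlinarith

end HasFivePrimitiveCollections

end BlowUpCenters

section Contraction

namespace HasFivePrimitiveCollections

variable {n p0 : ℕ} {V : Set (Fin n → ℝ)} {v : Fin p0 → Fin n → ℝ} {y z t u : Fin 1 → Fin n → ℝ}
  {c d : Fin 1 → ℕ} {i₀ : Fin 1}

lemma vector_relations (H : HasFivePrimitiveCollections V v y z t u c d i₀) :
    (∑ i, v i) + y 0 = ((d 0 : ℝ) + 1) • t 0 ∧ y 0 + z 0 = u 0 ∧ t 0 = - z 0 := by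
  have hc : c 0 = 0 := Subsingleton.elim i₀ 0 ▸ H.coeff_zero
  have h1 := H.rel_vy
  have h2 := H.rel_yz
  have h3 := H.rel_zt
  simp only [Finset.univ_unique, Fin.default_eq_zero, Fin.isValue, Finset.sum_singleton, hc,
    Nat.cast_zero, zero_smul, zero_add] at h1 h2 h3
  exact ⟨h1, h2, (neg_eq_of_add_eq_zero_right h3).symm⟩

lemma functional_relations (H : HasFivePrimitiveCollections V v y z t u c d i₀)
    (l : (Fin n → ℝ) →ₗ[ℝ] ℝ) :
    (∑ i, l (v i)) + l (y 0) = ((d 0 : ℝ) + 1) * l (t 0) ∧ l (y 0) + l (z 0) = l (u 0) ∧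
      l (t 0) = - l (z 0) := by
  obtain ⟨h1, h2, h3⟩ := H.vector_relations
  exact ⟨by simpa using congrArg l h1, by simpa using congrArg l h2, by simpa using congrArg l h3⟩

lemma eq_insert_u (H : HasFivePrimitiveCollections V v y z t u c d i₀) :
    V = insert (u 0) (range v ∪ {y 0, z 0, t 0}) := by
  rw [H.eq_union]
  simp only [range_unique, Fin.default_eq_zero]
  ext x
  simp only [mem_union, mem_singleton_iff, mem_insert_iff]
  tauto

lemma pairwise_ne (H : HasFivePrimitiveCollections V v y z t u c d i₀) :
    ((∀ i, v i ≠ y 0) ∧ (∀ i, v i ≠ z 0) ∧ (∀ i, v i ≠ t 0) ∧ (∀ i, v i ≠ u 0)) ∧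
      (y 0 ≠ z 0 ∧ y 0 ≠ t 0 ∧ y 0 ≠ u 0) ∧ (z 0 ≠ t 0 ∧ z 0 ≠ u 0) ∧ t 0 ≠ u 0 := by
  have hne (a b) (h : a ≠ b) := H.inj.ne (a₁ := a) (a₂ := b) h
  exact ⟨⟨fun i => hne (.inl i) (.inr (.inl 0)) (by simp),
    fun i => hne (.inl i) (.inr (.inr (.inl 0))) (by simp),
    fun i => hne (.inl i) (.inr (.inr (.inr (.inl 0)))) (by simp),
    fun i => hne (.inl i) (.inr (.inr (.inr (.inr 0)))) (by simp)⟩,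
    ⟨hne (.inr (.inl 0)) (.inr (.inr (.inl 0))) (by simp),
    hne (.inr (.inl 0)) (.inr (.inr (.inr (.inl 0)))) (by simp),
    hne (.inr (.inl 0)) (.inr (.inr (.inr (.inr 0)))) (by simp)⟩,
    ⟨hne (.inr (.inr (.inl 0))) (.inr (.inr (.inr (.inl 0)))) (by simp),
    hne (.inr (.inr (.inl 0))) (.inr (.inr (.inr (.inr 0)))) (by simp)⟩,
    hne (.inr (.inr (.inr (.inl 0)))) (.inr (.inr (.inr (.inr 0)))) (by simp)⟩

lemma v_injective (H : HasFivePrimitiveCollections V v y z t u c d i₀) : Function.Injective v :=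
  fun i j h => by simpa using @H.inj (.inl i) (.inl j) h

lemma zero_mem_interior_contraction (H : HasFivePrimitiveCollections V v y z t u c d i₀) :
    (0 : Fin n → ℝ) ∈ interior (convexHull ℝ (range v ∪ {y 0, z 0, t 0})) := by
  obtain ⟨-, hu, ht⟩ := H.vector_relations
  set V' := range v ∪ {y 0, z 0, t 0} with hV'
  have hy' := subset_convexHull ℝ V' (show y 0 ∈ V' by simp [hV'])
  have hz' := subset_convexHull ℝ V' (show z 0 ∈ V' by simp [hV'])
  have ht' := subset_convexHull ℝ V' (show t 0 ∈ V' by simp [hV'])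
  have hmid {a b : Fin n → ℝ} (ha : a ∈ convexHull ℝ V') (hb : b ∈ convexHull ℝ V') :
      (1 / 2 : ℝ) • (a + b) ∈ convexHull ℝ V' := by
    rw [smul_add]
    exact convex_convexHull ℝ V' ha hb (by norm_num) (by norm_num) (by norm_num)
  have h0 : (0 : Fin n → ℝ) ∈ convexHull ℝ V' := by simpa [ht] using hmid hz' ht'
  have hsub : convexHull ℝ ((fun x => (1 / 2 : ℝ) • x) '' V) ⊆ convexHull ℝ V' := by
    refine convexHull_min ?_ (convex_convexHull ℝ _)
    rw [image_subset_iff, H.eq_insert_u]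
    rintro x (rfl | hx)
    · simpa [hu] using hmid hy' hz'
    · simpa using hmid (subset_convexHull ℝ V' hx) h0
  refine interior_mono hsub ?_
  rw [image_smul, convexHull_smul, interior_smul₀ (by norm_num)]
  exact ⟨0, H.smooth.zero_mem, by simp⟩

lemma exists_facet_contraction (H : HasFivePrimitiveCollections V v y z t u c d i₀)
    (i : Fin p0) :
    ∃ l, IsFacetFunctional (range v ∪ {y 0, z 0, t 0}) l ∧ l (y 0) = 1 ∧ l (z 0) = 1 ∧
      ∀ j, j ≠ i → l (v j) = 1 := by
  obtain ⟨⟨vy, vz, vt, vu⟩, ⟨yz, yt, yu⟩, ⟨zt, zu⟩, tu⟩ := H.pairwise_ne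
  set S := v '' {j | j ≠ i} ∪ {y 0, u 0} with hS
  have hvS : v i ∉ S := by
    rintro (⟨j, hj, h⟩ | h | h)
    exacts [hj (H.v_injective h), vy i h, vu i h]
  have hzS : z 0 ∉ S := by
    rintro (⟨j, hj, h⟩ | h | h)
    exacts [vz j h, yz h.symm, zu h]
  have htS : t 0 ∉ S := by
    rintro (⟨j, hj, h⟩ | h | h)
    exacts [vt j h, yt h.symm, tu h]
  obtain ⟨l₁, hl₁, hsub⟩ := H.exists_facet_of_not_subset (S := S)
    (by
      rintro x (⟨j, hj, rfl⟩ | rfl | rfl)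
      exacts [H.v_mem j, H.y_mem 0, H.u_mem 0])
    (fun h => hvS (h (Or.inl ⟨_, rfl⟩))) (fun h => hzS (h (Or.inr ⟨_, rfl⟩)))
    (fun h => hzS (h (Or.inl ⟨_, rfl⟩))) (fun h => htS (h (Or.inl ⟨_, rfl⟩)))
    (fun h => hvS (h (Or.inr ⟨_, rfl⟩)))
  classical
  obtain ⟨l, hl⟩ := (H.smooth.unimodular l₁ hl₁).exists_functional
    fun x => if x = u 0 then 2 else 1
  have hly : l (y 0) = 1 := by rw [hl _ (hsub (by simp [hS])), if_neg yu]
  have hlu : l (u 0) = 2 := by rw [hl _ (hsub (by simp [hS])), if_pos rfl]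
  have hlv : ∀ j, j ≠ i → l (v j) = 1 := fun j hj => by
    rw [hl _ (hsub (Or.inl ⟨j, hj, rfl⟩)), if_neg (vu j)]
  obtain ⟨r1, r2, r3⟩ := H.functional_relations l
  have hlz : l (z 0) = 1 := by linarith
  have hlt : l (t 0) = -1 := by linarith
  rw [sum_eq_add_sub_one i hlv, hly, hlt] at r1
  have hp : (0 : ℝ) ≤ p0 := Nat.cast_nonneg _
  have hd : (0 : ℝ) ≤ d 0 := Nat.cast_nonneg _
  have hle : ∀ x ∈ range v ∪ {y 0, z 0, t 0}, l x ≤ 1 := by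
    rintro x (⟨j, rfl⟩ | rfl | rfl | rfl)
    · by_cases hj : j = i
      · rw [hj]; linarith
      · exact (hlv j hj).le
    all_goals linarith
  obtain ⟨l', hl', hsub'⟩ := exists_isFacetFunctional
    (H.smooth.finite.subset (H.eq_insert_u ▸ subset_insert _ _))
    H.zero_mem_interior_contraction hle
  exact ⟨l', hl', (hsub' ⟨by simp, hly⟩).2, (hsub' ⟨by simp, hlz⟩).2,
    fun j hj => (hsub' ⟨by simp, hlv j hj⟩).2⟩

lemma isSmoothFanoVertexSet_contraction (H : HasFivePrimitiveCollections V v y z t u c d i₀)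
    (hn : n = p0 + 1) : IsSmoothFanoVertexSet (range v ∪ {y 0, z 0, t 0}) := by
  obtain ⟨⟨vy, vz, vt, vu⟩, ⟨yz, yt, yu⟩, ⟨zt, zu⟩, tu⟩ := H.pairwise_ne
  set V' := range v ∪ {y 0, z 0, t 0} with hV'
  have hVV' : V = insert (u 0) V' := H.eq_insert_u
  have hsubV : V' ⊆ V := hVV' ▸ subset_insert _ _
  have hfin : V'.Finite := H.smooth.finite.subset hsubV
  refine ⟨hfin, fun x hx => H.smooth.lattice x (hsubV hx), H.zero_mem_interior_contraction,
    fun l hl => ?_, fun x hx => ?_⟩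
  swap
  · obtain ⟨l, hl, hlx⟩ := H.smooth.exists_facet x (hsubV hx)
    obtain ⟨l', hl', hsub⟩ := exists_isFacetFunctional hfin H.zero_mem_interior_contraction
      fun x hx => hl.1 x (hsubV hx)
    exact ⟨l', hl', (hsub ⟨hx, hlx⟩).2⟩
  rcases lt_or_ge (l (u 0)) 1 with hlu | hlu
  · have htight : tightSet V l = tightSet V' l := by
      rw [hVV', IsBlowUpCenter.tightSet_insert_of_ne hlu.ne]
    rw [← htight]
    refine H.smooth.unimodular l ⟨fun x hx => ?_, htight ▸ hl.2⟩
    rw [hVV'] at hx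
    rcases hx with rfl | hx
    exacts [hlu.le, hl.1 x hx]
  set T := tightSet V' l with hT
  have hTfin : T.Finite := hfin.subset tightSet_subset
  have hncard : p0 + 1 ≤ T.ncard := hn ▸ le_ncard_of_span_eq_top hTfin hl.2
  obtain ⟨r1, r2, r3⟩ := H.functional_relations l
  have hy1 : l (y 0) ≤ 1 := hl.1 _ (by simp [hV'])
  have hz1 : l (z 0) ≤ 1 := hl.1 _ (by simp [hV'])
  have hd : (0 : ℝ) ≤ d 0 := Nat.cast_nonneg _
  have hp : (0 : ℝ) < p0 := by exact_mod_cast H.pos0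
  have ht0 : l (t 0) ≤ 0 := by linarith
  have htT : t 0 ∉ T := fun h => by linarith [h.2]
  have hv_range : (range v).ncard = p0 := by
    rw [← image_univ, ncard_image_of_injective _ H.v_injective, ncard_univ, Nat.card_fin]
  have hv_not : ¬ range v ⊆ T := fun h => by
    rw [sum_eq_of_eq_one fun i => (h ⟨i, rfl⟩).2] at r1
    nlinarith
  have hcount : ∀ {w}, T ⊆ range v ∪ {w} → range v ⊆ T := by
    intro w h
    have h1 : (range v ∪ {w}).ncard ≤ p0 + 1 :=
      (ncard_union_le _ _).trans_eq (by rw [hv_range, ncard_singleton])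
    rw [eq_of_subset_of_ncard_le h (h1.trans hncard) ((finite_range v).union (finite_singleton w))]
    exact subset_union_left
  have hyT : y 0 ∈ T := by
    by_contra hy
    refine hv_not (hcount (w := z 0) fun x hx => ?_)
    rcases hx.1 with h | rfl | rfl | rfl
    exacts [Or.inl h, absurd hx hy, Or.inr rfl, absurd hx htT]
  have hzT : z 0 ∈ T := by
    by_contra hz
    refine hv_not (hcount (w := y 0) fun x hx => ?_)
    rcases hx.1 with h | rfl | rfl | rfl
    exacts [Or.inl h, Or.inr rfl, absurd hx hz, absurd hx htT]
  have huV' : u 0 ∉ V' := by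
    rintro (⟨i, h⟩ | h | h | h)
    exacts [vu i h, yu h.symm, zu h.symm, tu h.symm]
  have huT : u 0 ∉ T \ {z 0} := fun h => huV' h.1.1
  set W := insert (u 0) (T \ {z 0}) with hW
  have hvW : ¬ range v ⊆ W := fun h => hv_not fun x hx => by
    rcases h hx with rfl | h
    · obtain ⟨i, hi⟩ := hx
      exact absurd hi (vu i)
    · exact h.1
  have hzW : z 0 ∉ W := by
    rintro (h | h)
    exacts [zu h, h.2 rfl]
  have htW : t 0 ∉ W := by
    rintro (h | h)
    exacts [tu h, htT h.1]
  obtain ⟨l₁, hl₁, hsub⟩ := H.exists_facet_of_not_subset (S := W)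
    (insert_subset (H.u_mem 0) (sdiff_subset.trans (tightSet_subset.trans hsubV)))
    (fun h => hvW (subset_union_left.trans h)) (fun h => hzW (h (Or.inr ⟨_, rfl⟩)))
    (fun h => hzW (h (Or.inl ⟨_, rfl⟩))) (fun h => htW (h (Or.inl ⟨_, rfl⟩)))
    (fun h => hvW (subset_union_right.trans h))
  have hb := H.smooth.unimodular l₁ hl₁
  have hWcard : W.ncard = T.ncard := by
    rw [hW, ncard_insert_of_notMem huT (hTfin.subset sdiff_subset),
      ncard_sdiff_singleton_add_one hzT hTfin]
  rw [← eq_of_subset_of_ncard_le hsub (by rw [hb.ncard_eq, hWcard]; omega) hb.finite] at hb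
  have hWu : W \ {u 0} = T \ {z 0} := by
    rw [hW, insert_sdiff_of_mem _ (mem_singleton _), sdiff_singleton_eq_self huT]
  have hbasis := hb.insert_sdiff (mem_insert _ _) (H.smooth.lattice _ (H.z_mem 0)) hzW (by
    rw [hWu, ← H.vector_relations.2.1, sub_add_cancel_right]
    exact Submodule.neg_mem _ (Submodule.subset_span ⟨hyT, yz⟩))
  rwa [hWu, insert_sdiff_singleton, insert_eq_of_mem hzT] at hbasis

lemma isBlowUpCenter_contraction (H : HasFivePrimitiveCollections V v y z t u c d i₀) :
    IsBlowUpCenter (range v ∪ {y 0, z 0, t 0}) {y 0, z 0} := by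
  obtain ⟨-, ⟨yz, -⟩, -⟩ := H.pairwise_ne
  have hmem : ∀ {l : (Fin n → ℝ) →ₗ[ℝ] ℝ}, l (y 0) = 1 → l (z 0) = 1 →
      ↑({y 0, z 0} : Finset (Fin n → ℝ)) ⊆ tightSet (range v ∪ {y 0, z 0, t 0}) l := by
    intro l hy hz x hx
    simp only [Finset.coe_insert, Finset.coe_singleton, mem_insert_iff, mem_singleton_iff] at hx
    rcases hx with rfl | rfl
    exacts [⟨by simp, hy⟩, ⟨by simp, hz⟩]
  refine ⟨by rw [Finset.card_pair yz]; norm_num, ?_, fun l hl hl1 => ?_⟩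
  · obtain ⟨l, hl, hy, hz, -⟩ := H.exists_facet_contraction ⟨0, H.pos0⟩
    exact ⟨l, hl, hmem hy hz⟩
  rw [Finset.sum_pair yz, map_add] at hl1
  obtain ⟨r1, r2, r3⟩ := H.functional_relations l
  have hy1 : l (y 0) ≤ 1 := hl _ (by simp)
  obtain ⟨i, hi⟩ : ∃ i, l (v i) ≠ 1 := by
    by_contra! h
    rw [sum_eq_of_eq_one h] at r1
    have hd : (d 0 : ℝ) + 1 < p0 + 1 := by exact_mod_cast H.coeff_add_one_lt
    have hd0 : (0 : ℝ) ≤ d 0 := Nat.cast_nonneg _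
    nlinarith
  obtain ⟨l', hl', hy, hz, hv⟩ := H.exists_facet_contraction i
  refine ⟨l', hl', hmem hy hz, ?_⟩
  rintro x ⟨⟨j, rfl⟩ | rfl | rfl | rfl, hx⟩
  · exact ⟨Or.inl ⟨j, rfl⟩, hv j fun h => hi (h ▸ hx)⟩
  · exact ⟨by simp, hy⟩
  · exact ⟨by simp, hz⟩
  · linarith

lemma not_fIsolated_of_contraction (H : HasFivePrimitiveCollections V v y z t u c d i₀)
    (hn : n = p0 + 1) : ¬ FIsolated (convexHull ℝ V) := by
  have h := H.isBlowUpCenter_contraction.not_fIsolated_insert (by have := H.pos0; omega)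
    (H.isSmoothFanoVertexSet_contraction hn)
  rwa [Finset.sum_pair H.pairwise_ne.2.1.1, H.vector_relations.2.1, ← H.eq_insert_u] at h

end HasFivePrimitiveCollections

end Contraction

end

/-- Let `P` be a smooth Fano `n`-polytope with `n+3` vertices
having exactly five primitive collections, with vertices labeled
`v_1, …, v_{p_0}, y_1, …, y_{p_1}, z_1, …, z_{p_2}, t_1, …, t_{p_3},
u_1, …, u_{p_4}` and primitive relations as in Proposition `pic3` (ii).
If `P` is F-isolated, then `p_0 ≥ 2`, `p_2 = p_3 = 1`, `p_1 = p_4 ≥ 2` and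
`d_1 = p_0 + p_1 - 2`. -/
theorem F_isolated_constraints_on_pic3_data {n : ℕ} (P : Set (Fin n → ℝ))
    (hP : IsSmoothFano P) (hcard : (vertexSet P).ncard = n + 3)
    (p0 p1 p2 p3 p4 : ℕ)
    (h0 : 0 < p0) (h1 : 0 < p1) (h2 : 0 < p2) (h3 : 0 < p3) (h4 : 0 < p4)
    (hsum : p0 + p1 + p2 + p3 + p4 = n + 3)
    (v : Fin p0 → Fin n → ℝ) (y : Fin p1 → Fin n → ℝ)
    (zz : Fin p2 → Fin n → ℝ) (tt : Fin p3 → Fin n → ℝ)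
    (u : Fin p4 → Fin n → ℝ) (c : Fin p2 → ℕ) (d : Fin p3 → ℕ)
    (hc1 : c ⟨0, h2⟩ = 0)
    (hV : vertexSet P =
      Set.range v ∪ Set.range y ∪ Set.range zz ∪ Set.range tt ∪ Set.range u)
    (hPC : ∀ B : Set (Fin n → ℝ), IsPrimitiveCollection P B ↔
      (B = Set.range v ∪ Set.range y ∨ B = Set.range y ∪ Set.range zz ∨
       B = Set.range zz ∪ Set.range tt ∨ B = Set.range tt ∪ Set.range u ∨
       B = Set.range u ∪ Set.range v))
    (hr1 : (∑ i, v i) + (∑ i, y i) =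
      (∑ i, (c i : ℝ) • zz i) + ∑ i, ((d i : ℝ) + 1) • tt i)
    (hr2 : (∑ i, y i) + (∑ i, zz i) = ∑ i, u i)
    (hr3 : (∑ i, zz i) + (∑ i, tt i) = 0)
    (hr4 : (∑ i, tt i) + (∑ i, u i) = ∑ i, y i)
    (hr5 : (∑ i, u i) + (∑ i, v i) =
      (∑ i, (c i : ℝ) • zz i) + ∑ i, (d i : ℝ) • tt i)
    (hiso : FIsolated P) :
    2 ≤ p0 ∧ p2 = 1 ∧ p3 = 1 ∧ p1 = p4 ∧ 2 ≤ p1 ∧ d ⟨0, h3⟩ = p0 + p1 - 2 := by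
  have hn : 2 ≤ n := by omega
  obtain ⟨hVs, hconv⟩ := IsSmoothFanoVertexSet.of_isSmoothFano hn hP
  have hrange : Set.range (Sum.elim v (Sum.elim y (Sum.elim zz (Sum.elim tt u)))) =
      vertexSet P := by
    simp only [hV, Set.Sum.elim_range, Set.union_assoc]
  have hinj : Function.Injective (Sum.elim v (Sum.elim y (Sum.elim zz (Sum.elim tt u)))) := by
    rw [← Set.injOn_univ, ← Set.ncard_image_iff, Set.image_univ, hrange, hcard, Set.ncard_univ,
      Nat.card_eq_fintype_card]
    simp only [Fintype.card_sum, Fintype.card_fin]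
    omega
  have H : HasFivePrimitiveCollections (vertexSet P) v y zz tt u c d ⟨0, h2⟩ :=
    ⟨hVs, hcard, hinj, hV, h0, h1, h3, h4, hc1, by rwa [hconv], hr1, hr2, hr3, hr4, hr5⟩
  have hno : ¬ ∃ F, IsBlowUpCenter (vertexSet P) F := by
    rintro ⟨F, hF⟩
    exact hF.not_fIsolated hn hVs (by rwa [hconv])
  have hp2 : p2 = 1 := by
    by_contra h
    rcases le_or_gt p4 p1 with h' | h'
    · exact hno (H.exists_isBlowUpCenter_z (by omega) h')
    · exact hno (H.exists_isBlowUpCenter_z_t (by omega) h')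
  have hp3 : p3 = 1 := by
    by_contra h
    rcases le_or_gt p1 p4 with h' | h'
    · exact hno (H.exists_isBlowUpCenter_t (by omega) h')
    · exact hno (H.exists_isBlowUpCenter_t_z (by omega) h')
  have hp14 : p1 = p4 := by
    have := H.p4_lt
    have := H.p1_lt
    omega
  subst hp2 hp3 hp14
  have hd : d 0 + 1 < p0 + p1 := H.coeff_add_one_lt
  have hp0 : 2 ≤ p0 := by
    by_contra h
    obtain rfl : p0 = 1 := by omega
    exact hno H.exists_isBlowUpCenter_v_z
  have hd' : ¬ d 0 + 2 < p0 + p1 := fun h => hno (H.exists_isBlowUpCenter_v_v hp0 h)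
  have hp1 : 2 ≤ p1 := by
    by_contra h
    obtain rfl : p1 = 1 := by omega
    exact H.not_fIsolated_of_contraction (by omega) (by rwa [hconv])
  refine ⟨hp0, rfl, rfl, rfl, hp1, ?_⟩
  change d 0 = _
  omega
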